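/- (Non-asymptotic 2-Wasserstein error bound for LMC, Theorem 3) Let f : ℝ^d → ℝ be three times continuously differentiable with m·I ≼ ∇²f(x) ≼ L·I for all x (0 < m ≤ L), κ = L/m, ∇f(0) = 0, and ‖∇(Δf)(x)‖ ≤ G(1+‖x‖) for all x for some G > 0. Let μ be the probability measure on ℝ^d with density proportional to exp(−f), assumed to have finite second moment. Let (x̄_k) be the LMC iterates with step size h started from a square-integrable x₀. Then for every h with 0 < h ≤ 1/(4κL) and every k ∈ ℕ: W₂(Law(x̄_k), μ) ≤ exp(−mkh) · W₂(Law(x₀), μ) + C_LMC · h, where C_LMC = (10(L² + G)/m^{3/2}) · √(2d + m(E‖x₀‖² + 1)). -/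

import Mathlib

open MeasureTheory ProbabilityTheory Real
open scoped ENNReal NNReal

noncomputable section

/-- `ℝ^d` with the Euclidean structure. -/
abbrev Euc (d : ℕ) := EuclideanSpace ℝ (Fin d)

/-- The standard Gaussian measure `N(0, I_d)` on `ℝ^d`. -/
noncomputable def stdGaussian (d : ℕ) : Measure (Euc d) :=
  (Measure.pi fun _ : Fin d => gaussianReal 0 1).map (EuclideanSpace.equiv (Fin d) ℝ).symm

/-- The centered Gaussian measure on `ℝ^d` with covariance `σ2 • I_d`. -/
noncomputable def isoGaussian (d : ℕ) (σ2 : ℝ) : Measure (Euc d) :=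
  (stdGaussian d).map fun x => Real.sqrt σ2 • x

/-- `B` is a standard `d`-dimensional Brownian motion with respect to the filtration `ℱ`
under the probability measure `P`. -/
structure IsStdBrownian {d : ℕ} {Ω : Type*} {mΩ : MeasurableSpace Ω} (P : Measure Ω)
    (ℱ : Filtration ℝ mΩ) (B : ℝ → Ω → Euc d) : Prop where
  init : ∀ ω, B 0 ω = 0
  cont : ∀ ω, Continuous fun t => B t ω
  adapted : StronglyAdapted ℱ B
  incr_law : ∀ s t : ℝ, 0 ≤ s → s ≤ t →
    P.map (fun ω => B t ω - B s ω) = isoGaussian d (t - s)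
  incr_indep : ∀ s t : ℝ, 0 ≤ s → s ≤ t →
    Indep (MeasurableSpace.comap (fun ω => B t ω - B s ω) inferInstance) (ℱ s) P

/-- `X` is a (pathwise) solution of the overdamped Langevin dynamics
`dX_t = -∇f(X_t) dt + √2 dB_t`: a continuous adapted process satisfying the integral
equation `X_t = X_0 - ∫₀ᵗ ∇f(X_s) ds + √2 B_t` for all `t ≥ 0`. -/
structure IsLangevinSolution {d : ℕ} {Ω : Type*} {mΩ : MeasurableSpace Ω}
    (ℱ : Filtration ℝ mΩ) (f : Euc d → ℝ) (B : ℝ → Ω → Euc d) (X : ℝ → Ω → Euc d) : Prop where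
  cont : ∀ ω, Continuous fun t => X t ω
  adapted : StronglyAdapted ℱ X
  eqn : ∀ ω, ∀ t : ℝ, 0 ≤ t →
    X t ω = X 0 ω - (∫ s in (0:ℝ)..t, gradient f (X s ω)) + Real.sqrt 2 • B t ω

/-- The Hessian bounds `m • I ≼ ∇²f(x) ≼ L • I` for all `x`, expressed through the second
iterated Fréchet derivative: `m ‖v‖² ≤ ⟨v, ∇²f(x) v⟩ ≤ L ‖v‖²`. -/
def HessianBounds {d : ℕ} (m L : ℝ) (f : Euc d → ℝ) : Prop :=
  ∀ x v : Euc d, m * ‖v‖ ^ 2 ≤ iteratedFDeriv ℝ 2 f x ![v, v] ∧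
    iteratedFDeriv ℝ 2 f x ![v, v] ≤ L * ‖v‖ ^ 2


/-- The 2-Wasserstein distance:
`W₂(μ, ν) = inf over couplings γ of (∫ ‖x - y‖² dγ)^{1/2}`, where a coupling of `μ` and `ν`
is a probability measure on the product space whose marginals are `μ` and `ν`. -/
noncomputable def W2 {α : Type*} [MeasurableSpace α] [NormedAddCommGroup α]
    (μ ν : Measure α) : ℝ :=
  Real.sqrt (ENNReal.toReal
    (⨅ γ ∈ {γ : Measure (α × α) |
        IsProbabilityMeasure γ ∧ γ.map Prod.fst = μ ∧ γ.map Prod.snd = ν},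
      ∫⁻ p, (‖p.1 - p.2‖₊ : ℝ≥0∞) ^ 2 ∂γ))

/-- `μ` is the probability measure with density proportional to `exp (-f)` with respect to
Lebesgue measure. -/
def IsGibbs {d : ℕ} (f : Euc d → ℝ) (μ : Measure (Euc d)) : Prop :=
  IsProbabilityMeasure μ ∧ ∃ c : ℝ≥0∞, c ≠ 0 ∧ c ≠ ⊤ ∧
    μ = c • (volume : Measure (Euc d)).withDensity fun x => ENNReal.ofReal (Real.exp (-f x))


/-- The Laplacian of `f : ℝ^d → ℝ`, i.e. the trace of its Hessian. -/
noncomputable def lapl {d : ℕ} (f : Euc d → ℝ) (x : Euc d) : ℝ :=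
  ∑ i : Fin d,
    iteratedFDeriv ℝ 2 f x ![EuclideanSpace.single i (1:ℝ), EuclideanSpace.single i (1:ℝ)]

section

/-! ### Gradient and Hessian facts -/

lemma inner_gradient_eq {d : ℕ} {f : Euc d → ℝ} (x v : Euc d) :
    inner ℝ (gradient f x) v = fderiv ℝ f x v := by
  rw [← InnerProductSpace.toDual_apply_apply, toDual_gradient]

lemma contDiff_gradient {d : ℕ} {f : Euc d → ℝ} (hf : ContDiff ℝ 3 f) :
    ContDiff ℝ 2 (gradient f) := by
  have h1 : ContDiff ℝ 2 (fderiv ℝ f) := hf.fderiv_right (by norm_num)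
  have : gradient f = fun x => (InnerProductSpace.toDual ℝ (Euc d)).symm (fderiv ℝ f x) := by
    funext x
    rfl
  rw [this]
  exact (InnerProductSpace.toDual ℝ (Euc d)).symm.toContinuousLinearEquiv.contDiff.comp h1

lemma hasFDerivAt_gradient {d : ℕ} {f : Euc d → ℝ} (hf : ContDiff ℝ 3 f) (x : Euc d) :
    HasFDerivAt (gradient f) (fderiv ℝ (gradient f) x) x :=
  ((contDiff_gradient hf).differentiable (by norm_num) x).hasFDerivAt

lemma inner_hess_eq' {d : ℕ} {f : Euc d → ℝ} (hf : ContDiff ℝ 3 f) (x u v : Euc d) :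
    inner ℝ (fderiv ℝ (gradient f) x u) v = fderiv ℝ (fderiv ℝ f) x u v := by
  have h1 : HasFDerivAt (fun y => inner ℝ (gradient f y) v)
      ((innerSL ℝ v).comp (fderiv ℝ (gradient f) x)) x := by
    have := (innerSL ℝ v).hasFDerivAt.comp x (hasFDerivAt_gradient hf x)
    convert! this using 2 with y
    simp [real_inner_comm]
  have hd : Differentiable ℝ (fderiv ℝ f) :=
    (hf.fderiv_right (m := 2) (by norm_num)).differentiable (by norm_num)
  have h2 : HasFDerivAt (fun y => fderiv ℝ f y v)
      ((fderiv ℝ (fderiv ℝ f) x).flip v) x := by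
    have := (hd x).hasFDerivAt.clm_apply (hasFDerivAt_const v x)
    convert! this using 1
    ext w; simp
  have h3 : (fun y => inner ℝ (gradient f y) v) = fun y => fderiv ℝ f y v := by
    funext y; exact inner_gradient_eq y v
  rw [h3] at h1
  have := congrArg (fun T => T u) (h1.unique h2)
  simp only [ContinuousLinearMap.comp_apply, innerSL_apply_apply, ContinuousLinearMap.flip_apply] at this
  rw [real_inner_comm]; exact this

lemma inner_hess_eq {d : ℕ} {f : Euc d → ℝ} (hf : ContDiff ℝ 3 f) (x u v : Euc d) :
    inner ℝ (fderiv ℝ (gradient f) x u) v = iteratedFDeriv ℝ 2 f x ![u, v] := by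
  rw [inner_hess_eq' hf, iteratedFDeriv_two_apply]; simp

lemma hess_symm {d : ℕ} {f : Euc d → ℝ} (hf : ContDiff ℝ 3 f) (x u v : Euc d) :
    inner ℝ (fderiv ℝ (gradient f) x u) v = inner ℝ u (fderiv ℝ (gradient f) x v) := by
  rw [inner_hess_eq' hf, real_inner_comm, inner_hess_eq' hf]
  exact (hf.contDiffAt.isSymmSndFDerivAt (by simp; norm_num)) u v

lemma opNorm_le_of_symm {d : ℕ} (T : Euc d →L[ℝ] Euc d) {c : ℝ} (hc : 0 ≤ c)
    (hsymm : ∀ u v, inner ℝ (T u) v = inner ℝ u (T v))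
    (hT : ∀ v, |inner ℝ (T v) v| ≤ c * ‖v‖ ^ 2) : ‖T‖ ≤ c := by
  rw [ContinuousLinearMap.norm_eq_iSup_rayleighQuotient T (fun u v => hsymm u v)]
  refine ciSup_le fun x => ?_
  simp only [ContinuousLinearMap.rayleighQuotient, ContinuousLinearMap.reApplyInnerSelf_apply]
  rw [abs_div, abs_of_nonneg (sq_nonneg ‖x‖)]
  refine div_le_of_le_mul₀ (by positivity) hc ?_
  exact hT x

lemma hess_norm_le {d : ℕ} {f : Euc d → ℝ} {m L : ℝ} (hm : 0 < m) (hmL : m ≤ L)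
    (hf : ContDiff ℝ 3 f) (hH : HessianBounds m L f) (x : Euc d) :
    ‖fderiv ℝ (gradient f) x‖ ≤ L := by
  refine opNorm_le_of_symm _ (by linarith) (hess_symm hf x) fun v => ?_
  rw [inner_hess_eq hf]
  obtain ⟨h1, h2⟩ := hH x v
  have := mul_nonneg hm.le (sq_nonneg ‖v‖)
  rw [abs_le]; constructor <;> linarith

lemma gradient_lip {d : ℕ} {f : Euc d → ℝ} {m L : ℝ} (hm : 0 < m) (hmL : m ≤ L)
    (hf : ContDiff ℝ 3 f) (hH : HessianBounds m L f) (x y : Euc d) :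
    ‖gradient f x - gradient f y‖ ≤ L * ‖x - y‖ :=
  Convex.norm_image_sub_le_of_norm_fderiv_le (s := Set.univ)
    (fun z _ => (hasFDerivAt_gradient hf z).differentiableAt)
    (fun z _ => hess_norm_le hm hmL hf hH z) convex_univ (Set.mem_univ y) (Set.mem_univ x)

lemma gradient_step_contract {d : ℕ} {f : Euc d → ℝ} {m L : ℝ} (hm : 0 < m) (hmL : m ≤ L)
    (hf : ContDiff ℝ 3 f) (hH : HessianBounds m L f) {h : ℝ} (h0 : 0 ≤ h) (hL : h * L ≤ 1)
    (x y : Euc d) :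
    ‖(x - h • gradient f x) - (y - h • gradient f y)‖ ≤ (1 - m * h) * ‖x - y‖ := by
  have hmh : m * h ≤ 1 := by nlinarith
  have hd : ∀ z, HasFDerivAt (fun x => x - h • gradient f x)
      (ContinuousLinearMap.id ℝ _ - h • fderiv ℝ (gradient f) z) z := fun z =>
    (hasFDerivAt_id z).sub ((hasFDerivAt_gradient hf z).const_smul h)
  refine Convex.norm_image_sub_le_of_norm_hasFDerivWithin_le (s := Set.univ)
    (fun z _ => (hd z).hasFDerivWithinAt)
    (fun z _ => ?_) convex_univ (Set.mem_univ y) (Set.mem_univ x)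
  refine opNorm_le_of_symm _ (by linarith) (fun u v => ?_) fun v => ?_
  · simp only [ContinuousLinearMap.sub_apply, ContinuousLinearMap.id_apply,
      ContinuousLinearMap.smul_apply, inner_sub_left, inner_sub_right, inner_smul_left,
      inner_smul_right, hess_symm hf]
    simp
  · simp only [ContinuousLinearMap.sub_apply, ContinuousLinearMap.id_apply,
      ContinuousLinearMap.smul_apply, inner_sub_left, inner_smul_left, inner_hess_eq hf]
    obtain ⟨h1, h2⟩ := hH z v
    have e : inner ℝ v v = ‖v‖ ^ 2 := real_inner_self_eq_norm_sq v
    rw [e]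
    have a1 := mul_le_mul_of_nonneg_left h1 h0
    have a2 := mul_le_mul_of_nonneg_left h2 h0
    have a3 := mul_le_mul_of_nonneg_right hL (sq_nonneg ‖v‖)
    have a4 := mul_le_mul_of_nonneg_right hmh (sq_nonneg ‖v‖)
    simp only [conj_trivial]
    rw [abs_le]; constructor <;> nlinarith

end

section

/-! ### Gaussian facts -/

lemma stdG_eq (d : ℕ) : _root_.stdGaussian d = ProbabilityTheory.stdGaussian (Euc d) :=
  map_pi_eq_stdGaussian

instance stdG_prob (d : ℕ) : IsProbabilityMeasure (_root_.stdGaussian d) := by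
  rw [stdG_eq]; infer_instance

instance stdG_gauss (d : ℕ) : IsGaussian (_root_.stdGaussian d) := by
  rw [stdG_eq]; infer_instance

lemma stdG_memLp (d : ℕ) {p : ℝ≥0∞} (hp : p ≠ ⊤) :
    MemLp (fun x : Euc d => x) p (_root_.stdGaussian d) :=
  IsGaussian.memLp_id _ p hp

lemma stdG_integral_inner (d : ℕ) (v : Euc d) :
    ∫ x, inner ℝ v x ∂(_root_.stdGaussian d) = 0 := by
  rw [stdG_eq]
  exact integral_strongDual_stdGaussian (innerSL ℝ v)

lemma stdG_integral_sq (d : ℕ) :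
    ∫ x, ‖x‖ ^ 2 ∂(_root_.stdGaussian d) = d := by
  have h1 : ∀ x : Euc d, ‖x‖ ^ 2 =
      ∑ i, (innerSL ℝ (EuclideanSpace.single i (1:ℝ)) x) ^ 2 := by
    intro x
    rw [EuclideanSpace.real_norm_sq_eq]
    refine Finset.sum_congr rfl fun i _ => ?_
    rw [innerSL_apply_apply, EuclideanSpace.inner_single_left]
    simp
  have hL : ∀ v : Euc d, MemLp (innerSL ℝ v) 2 (_root_.stdGaussian d) := fun v =>
    IsGaussian.memLp_dual _ (innerSL ℝ v) 2 (by norm_num)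
  simp_rw [h1]
  rw [integral_finsetSum _ (fun i _ => (hL _).integrable_sq)]
  have h2 : ∀ v : Euc d, ∫ x, (innerSL ℝ v x) ^ 2 ∂(_root_.stdGaussian d) = ‖v‖ ^ 2 := by
    intro v
    have hv := variance_dual_stdGaussian (innerSL ℝ v)
    rw [variance_of_integral_eq_zero (by fun_prop) (integral_strongDual_stdGaussian _)] at hv
    rw [stdG_eq, hv, innerSL_apply_norm]
  simp_rw [h2]
  simp

lemma isoG_charFun (d : ℕ) {a : ℝ} (ha : 0 ≤ a) (t : Euc d) :
    charFun (isoGaussian d a) t = Complex.exp (-(a * ‖t‖ ^ 2) / 2) := by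
  rw [isoGaussian, charFun_map_smul, stdG_eq, charFun_stdGaussian]
  congr 2
  rw [norm_smul]
  have : (‖√a‖ * ‖t‖) ^ 2 = a * ‖t‖ ^ 2 := by
    rw [mul_pow, Real.norm_eq_abs, sq_abs, Real.sq_sqrt ha]
  exact_mod_cast congrArg (fun r : ℝ => -(r : ℂ)) this

instance isoG_prob (d : ℕ) (a : ℝ) : IsProbabilityMeasure (isoGaussian d a) :=
  Measure.isProbabilityMeasure_map (by fun_prop)

lemma isoG_zero (d : ℕ) : isoGaussian d 0 = Measure.dirac 0 := by
  simp [isoGaussian]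

lemma isoG_add (d : ℕ) {a b : ℝ} (ha : 0 ≤ a) (hb : 0 ≤ b) :
    ((isoGaussian d a).prod (_root_.stdGaussian d)).map (fun p => p.1 + √b • p.2)
      = isoGaussian d (a + b) := by
  have h1 : ((isoGaussian d a).prod (_root_.stdGaussian d)).map (fun p => p.1 + √b • p.2)
      = (isoGaussian d a).conv (isoGaussian d b) := by
    rw [Measure.conv]
    have : (isoGaussian d a).prod (isoGaussian d b) =
      ((isoGaussian d a).prod (_root_.stdGaussian d)).map (Prod.map id (fun x => √b • x)) := by
      rw [← Measure.map_prod_map _ _ measurable_id (by fun_prop), Measure.map_id]; rfl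
    rw [this, Measure.map_map (by fun_prop) (by fun_prop)]
    rfl
  rw [h1]
  apply Measure.ext_of_charFun
  ext t
  rw [charFun_conv, isoG_charFun d ha, isoG_charFun d hb, isoG_charFun d (by positivity),
    ← Complex.exp_add]
  congr 1
  push_cast
  ring

lemma integrable_exp_neg_sq (d : ℕ) {b : ℝ} (hb : 0 < b) :
    Integrable (fun x : Euc d => rexp (-b * ‖x‖ ^ 2)) := by
  have := (GaussianFourier.integrable_cexp_neg_mul_sq_norm_add (V := Euc d) (b := (b:ℂ))
    (by simpa using hb) 0 0).norm
  refine this.congr (ae_of_all _ fun x => ?_)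
  simp only [Complex.norm_exp]
  congr 1
  simp [← Complex.ofReal_pow]

/-- Gaussian normalisation constant. -/
def gK (d : ℕ) : ℝ := (2 * π) ^ (-(d / 2 : ℝ))

lemma gK_pos (d : ℕ) : 0 < gK d := by unfold gK; positivity

/-- Gaussian density -/
def gdens (d : ℕ) (x : Euc d) : ℝ := gK d * rexp (-(1/2) * ‖x‖ ^ 2)

lemma gdens_integrable (d : ℕ) : Integrable (gdens d) :=
  (integrable_exp_neg_sq d (by norm_num)).const_mul _

lemma gdens_pos (d : ℕ) (x : Euc d) : 0 < gdens d x := mul_pos (gK_pos d) (exp_pos _)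

lemma gdens_cont (d : ℕ) : Continuous (gdens d) := by unfold gdens; fun_prop

lemma stdG_density (d : ℕ) :
    _root_.stdGaussian d = (volume : Measure (Euc d)).withDensity
      (fun x => ENNReal.ofReal (gdens d x)) := by
  have : IsFiniteMeasure ((volume : Measure (Euc d)).withDensity
      (fun x => ENNReal.ofReal (gdens d x))) :=
    isFiniteMeasure_withDensity_ofReal (gdens_integrable d).2
  apply Measure.ext_of_charFun
  ext t
  rw [stdG_eq, charFun_stdGaussian, charFun_apply,
    integral_withDensity_eq_integral_toReal_smul₀ (by
      exact ((gdens_cont d).measurable.ennreal_ofReal).aemeasurable) (by simp)]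
  have h1 : ∀ x : Euc d, (ENNReal.ofReal (gdens d x)).toReal • Complex.exp (inner ℝ x t * Complex.I)
      = (gK d : ℂ) * Complex.exp (-(1/2 : ℝ) * ‖x‖ ^ 2 + Complex.I * inner ℝ t x) := by
    intro x
    rw [ENNReal.toReal_ofReal (gdens_pos d x).le, gdens, Complex.real_smul, Complex.exp_add,
      real_inner_comm]
    push_cast
    ring_nf
  simp_rw [h1]
  rw [integral_const_mul]
  have h2 := GaussianFourier.integral_cexp_neg_mul_sq_norm_add (V := Euc d) (b := ((1/2 : ℝ):ℂ))
    (by rw [Complex.ofReal_re]; norm_num) Complex.I t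
  rw [h2]
  have h3 : (gK d : ℂ) * (π / ((1/2 : ℝ):ℂ)) ^ ((Module.finrank ℝ (Euc d) : ℂ) / 2) = 1 := by
    have : (π / ((1/2 : ℝ):ℂ)) ^ ((Module.finrank ℝ (Euc d) : ℂ) / 2)
      = (((2 * π) ^ (d/2 : ℝ) : ℝ) : ℂ) := by
      rw [Complex.ofReal_cpow (by positivity)]
      simp
      congr 1
      ring
    rw [this, ← Complex.ofReal_mul, gK, Real.rpow_neg (by positivity), inv_mul_cancel₀ (by positivity)]
    simp
  rw [← mul_assoc, h3, one_mul]
  congr 1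
  simp
  ring

end

section

/-! ### Heat flow estimate -/

/-- unit vectors -/
abbrev ee {d : ℕ} (i : Fin d) : Euc d := EuclideanSpace.single i (1:ℝ)

lemma ee_norm {d : ℕ} (i : Fin d) : ‖(ee i : Euc d)‖ = 1 := by simp [ee]

lemma sum_ee {d : ℕ} (x : Euc d) : ∑ i, x i • (ee i : Euc d) = x := by
  have := (EuclideanSpace.basisFun (Fin d) ℝ).sum_repr x
  simpa using this

lemma stdG_integral {d : ℕ} (F : Euc d → ℝ) :
    ∫ x, F x ∂(_root_.stdGaussian d) = ∫ x, F x * gdens d x := by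
  rw [stdG_density, integral_withDensity_eq_integral_toReal_smul₀ (by
      exact ((gdens_cont d).measurable.ennreal_ofReal).aemeasurable) (by simp)]
  refine integral_congr_ae (ae_of_all _ fun x => ?_)
  simp only [ENNReal.toReal_ofReal (gdens_pos d x).le, smul_eq_mul, mul_comm]

lemma gdens_hasFDerivAt {d : ℕ} (x : Euc d) :
    HasFDerivAt (gdens d) (-(gdens d x) • innerSL ℝ x) x := by
  have h1 : HasFDerivAt (fun x : Euc d => ‖x‖ ^ 2) (2 • innerSL ℝ x) x :=
    (hasStrictFDerivAt_norm_sq x).hasFDerivAt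
  have h2 := ((h1.const_mul (-(1/2:ℝ))).exp).const_mul (gK d)
  refine h2.congr_fderiv ?_
  ext v
  simp [gdens]
  ring

lemma gdens_contDiff {d : ℕ} : ContDiff ℝ 1 (gdens d) := by
  unfold gdens
  exact contDiff_const.mul (contDiff_exp.comp (contDiff_const.mul (contDiff_norm_sq ℝ)))

/-- Stein identity for compactly supported functions. -/
lemma stein_compact {d : ℕ} {u : Euc d → ℝ} (hu : ContDiff ℝ 1 u) (hc : HasCompactSupport u)
    (i : Fin d) :
    ∫ x, u x * x i ∂(_root_.stdGaussian d) = ∫ x, fderiv ℝ u x (ee i) ∂(_root_.stdGaussian d) := by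
  rw [stdG_integral, stdG_integral]
  have hfd : ∀ x, fderiv ℝ (gdens d) x (ee i) = -(x i * gdens d x) := by
    intro x
    rw [(gdens_hasFDerivAt x).fderiv]
    simp [ee, EuclideanSpace.inner_single_right]
    ring
  have hcu' : Continuous fun x => fderiv ℝ u x (ee i) :=
    (hu.continuous_fderiv (by norm_num)).clm_apply continuous_const
  have hcg' : Continuous fun x => fderiv ℝ (gdens d) x (ee i) :=
    (gdens_contDiff.continuous_fderiv (by norm_num)).clm_apply continuous_const
  have := integral_mul_fderiv_eq_neg_fderiv_mul_of_integrable (μ := (volume : Measure (Euc d)))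
    (f := u) (g := gdens d) (v := ee i)
    ((hcu'.mul (gdens_cont d)).integrable_of_hasCompactSupport
      (HasCompactSupport.mul_right (hc.fderiv_apply (𝕜 := ℝ) (ee i))))
    ((hu.continuous.mul hcg').integrable_of_hasCompactSupport hc.mul_right)
    ((hu.continuous.mul (gdens_cont d)).integrable_of_hasCompactSupport hc.mul_right)
    (fun x _ => (hu.differentiable (by norm_num)) x) (fun x _ => (gdens_hasFDerivAt x).differentiableAt)
  simp_rw [hfd] at this
  rw [← neg_inj, ← this, ← integral_neg]
  congr 1
  ext x
  ring

/-- Laplacian written with iterated directional derivatives. -/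
def Lap {d : ℕ} (φ : Euc d → ℝ) (x : Euc d) : ℝ :=
  ∑ i : Fin d, fderiv ℝ (fun y => fderiv ℝ φ y (ee i)) x (ee i)

lemma contDiff_dir {d : ℕ} {φ : Euc d → ℝ} (hφ : ContDiff ℝ 2 φ) (v : Euc d) :
    ContDiff ℝ 1 (fun y => fderiv ℝ φ y v) :=
  (hφ.fderiv_right (m := 1) (by norm_num)).clm_apply contDiff_const

lemma continuous_Lap {d : ℕ} {φ : Euc d → ℝ} (hφ : ContDiff ℝ 2 φ) : Continuous (Lap φ) := by
  unfold Lap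
  refine continuous_finsetSum _ fun i _ => ?_
  exact ((contDiff_dir hφ (ee i)).continuous_fderiv (by norm_num)).clm_apply continuous_const

lemma stein_cut {d : ℕ} {φ χ : Euc d → ℝ} (hφ : ContDiff ℝ 2 φ) (hχ : ContDiff ℝ 1 χ)
    (hc : HasCompactSupport χ) (y : Euc d) (r : ℝ) :
    ∫ x, χ x * fderiv ℝ φ (y + r • x) x ∂(_root_.stdGaussian d) =
      ∫ x, (χ x * (r * Lap φ (y + r • x)) +
        ∑ i : Fin d, fderiv ℝ φ (y + r • x) (ee i) * fderiv ℝ χ x (ee i)) ∂(_root_.stdGaussian d) := by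
  set u : Fin d → Euc d → ℝ := fun i x => χ x * fderiv ℝ φ (y + r • x) (ee i) with hu_def
  have haff : ContDiff ℝ 1 (fun x : Euc d => y + r • x) := by fun_prop
  have hψ : ∀ i, ContDiff ℝ 1 (fun x : Euc d => fderiv ℝ φ (y + r • x) (ee i)) := fun i =>
    (contDiff_dir hφ (ee i)).comp haff
  have hu : ∀ i, ContDiff ℝ 1 (u i) := fun i => hχ.mul (hψ i)
  have huc : ∀ i, HasCompactSupport (u i) := fun i => hc.mul_right
  have e1 : ∀ x, χ x * fderiv ℝ φ (y + r • x) x = ∑ i, u i x * x i := by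
    intro x
    conv_lhs => rw [show fderiv ℝ φ (y + r • x) x = fderiv ℝ φ (y + r • x) (∑ i, x i • (ee i : Euc d))
      by rw [sum_ee]]
    rw [map_sum, Finset.mul_sum]
    refine Finset.sum_congr rfl fun i _ => ?_
    simp only [map_smul, smul_eq_mul, hu_def]
    ring
  have e2 : ∀ x, χ x * (r * Lap φ (y + r • x)) +
        ∑ i : Fin d, fderiv ℝ φ (y + r • x) (ee i) * fderiv ℝ χ x (ee i)
        = ∑ i, fderiv ℝ (u i) x (ee i) := by
    intro x
    rw [Lap, Finset.mul_sum, Finset.mul_sum, ← Finset.sum_add_distrib]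
    refine Finset.sum_congr rfl fun i _ => ?_
    have hh : HasFDerivAt (fun x : Euc d => fderiv ℝ φ (y + r • x) (ee i))
        ((fderiv ℝ (fun y => fderiv ℝ φ y (ee i)) (y + r • x)).comp
          (r • ContinuousLinearMap.id ℝ (Euc d))) x := by
      have h1 : HasFDerivAt (fun x : Euc d => y + r • x) (r • ContinuousLinearMap.id ℝ (Euc d)) x :=
        ((hasFDerivAt_id x).const_smul r).const_add y
      exact HasFDerivAt.comp x
        ((contDiff_dir hφ (ee i)).differentiable (by norm_num) (y + r • x)).hasFDerivAt h1
    have := ((hχ.differentiable (by norm_num) x).hasFDerivAt.mul hh).fderiv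
    have h3 : fderiv ℝ (u i) x = _ := this
    rw [h3]
    simp
  simp_rw [e1, e2]
  have hintg : ∀ {w : Euc d → ℝ}, Continuous w → HasCompactSupport w →
      Integrable w (_root_.stdGaussian d) := fun hw hwc => hw.integrable_of_hasCompactSupport hwc
  rw [integral_finsetSum, integral_finsetSum]
  · exact Finset.sum_congr rfl fun i _ => stein_compact (hu i) (huc i) i
  · intro i _
    exact hintg (((hu i).continuous_fderiv (by norm_num)).clm_apply continuous_const)
      ((huc i).fderiv_apply (𝕜 := ℝ) (ee i))
  · intro i _
    exact hintg ((hu i).continuous.mul (by fun_prop)) (huc i).mul_right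

/-- A sequence of smooth cutoffs. -/
lemma exists_cutoff (d : ℕ) : ∃ χ : ℕ → Euc d → ℝ, ∃ C : ℝ, 0 ≤ C ∧
    (∀ n, ContDiff ℝ 1 (χ n)) ∧ (∀ n, HasCompactSupport (χ n)) ∧ (∀ n x, |χ n x| ≤ 1) ∧
    (∀ x, Filter.Tendsto (fun n => χ n x) Filter.atTop (nhds 1)) ∧
    (∀ n x, ‖fderiv ℝ (χ n) x‖ ≤ C / (n + 1)) := by
  let b : ContDiffBump (0 : Euc d) := ⟨1, 2, by norm_num, by norm_num⟩
  have hbd : ContDiff ℝ 1 (b : Euc d → ℝ) := b.contDiff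
  have hbc : HasCompactSupport (b : Euc d → ℝ) := b.hasCompactSupport
  obtain ⟨C, hC⟩ := (hbd.continuous_fderiv (by norm_num)).bounded_above_of_compact_support
    (hbc.fderiv (𝕜 := ℝ))
  have hC0 : 0 ≤ C := (norm_nonneg _).trans (hC 0)
  have hpos : ∀ n : ℕ, (0:ℝ) < ((n:ℝ) + 1)⁻¹ := fun n => by positivity
  refine ⟨fun n x => b (((n:ℝ) + 1)⁻¹ • x), C, hC0, fun n => ?_, fun n => ?_, fun n x => ?_, fun x => ?_,
    fun n x => ?_⟩
  · exact hbd.comp (by fun_prop)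
  · exact hbc.comp_homeomorph (Homeomorph.smulOfNeZero _ (hpos n).ne')
  · rw [abs_of_nonneg b.nonneg]; exact b.le_one
  · have h1 : Filter.Tendsto (fun n : ℕ => ((n:ℝ) + 1)⁻¹ • x) Filter.atTop (nhds ((0:ℝ) • x)) := by
      have := tendsto_one_div_add_atTop_nhds_zero_nat (𝕜 := ℝ)
      simp only [one_div] at this
      exact this.smul_const x
    rw [zero_smul] at h1
    have h2 := (hbd.continuous.tendsto 0).comp h1
    have h3 : (b : Euc d → ℝ) 0 = 1 := b.one_of_mem_closedBall (by simp [b])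
    rw [h3] at h2
    exact h2
  · have h0 : HasFDerivAt (fun x : Euc d => ((n:ℝ) + 1)⁻¹ • x)
        (((n:ℝ) + 1)⁻¹ • ContinuousLinearMap.id ℝ (Euc d)) x :=
      (hasFDerivAt_id x).const_smul (((n:ℝ) + 1)⁻¹)
    have h1 : HasFDerivAt (fun x : Euc d => b (((n:ℝ) + 1)⁻¹ • x))
        ((fderiv ℝ b (((n:ℝ) + 1)⁻¹ • x)).comp (((n:ℝ) + 1)⁻¹ • ContinuousLinearMap.id ℝ (Euc d))) x :=
      HasFDerivAt.comp (g := (b : Euc d → ℝ)) (f := fun x : Euc d => ((n:ℝ) + 1)⁻¹ • x) x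
        (hbd.differentiable (by norm_num) _).hasFDerivAt h0
    rw [h1.fderiv, ContinuousLinearMap.comp_smul, ContinuousLinearMap.comp_id, norm_smul,
      Real.norm_of_nonneg (hpos n).le, div_eq_inv_mul]
    exact mul_le_mul_of_nonneg_left (hC _) (hpos n).le

end

section

lemma stdG_integrable_norm (d : ℕ) : Integrable (fun x : Euc d => ‖x‖) (_root_.stdGaussian d) :=
  ((stdG_memLp d (p := 1) (by norm_num)).integrable le_rfl).norm

lemma stdG_integral_norm_le (d : ℕ) : ∫ x, ‖x‖ ∂(_root_.stdGaussian d) ≤ √d := by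
  apply Real.le_sqrt_of_sq_le
  have h2 : Integrable (fun x : Euc d => ‖x‖ ^ 2) (_root_.stdGaussian d) :=
    (stdG_memLp d (p := 2) (by norm_num)).integrable_norm_pow (by norm_num)
  have hvar := ProbabilityTheory.variance_nonneg (fun x : Euc d => ‖x‖) (_root_.stdGaussian d)
  rw [variance_eq_sub (stdG_memLp d (p := 2) (by norm_num)).norm] at hvar
  have := stdG_integral_sq d
  simp only [Pi.pow_apply] at hvar
  rw [this] at hvar
  linarith

/-- Stein identity for a function with bounded gradient and Laplacian of linear growth. -/
lemma stein_full {d : ℕ} {φ : Euc d → ℝ} (hφ : ContDiff ℝ 2 φ) {K G : ℝ}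
    (hK : ∀ x, ‖fderiv ℝ φ x‖ ≤ K) (hG : ∀ x, |Lap φ x| ≤ G * (1 + ‖x‖)) (hG0 : 0 ≤ G)
    (y : Euc d) (r : ℝ) :
    ∫ x, fderiv ℝ φ (y + r • x) x ∂(_root_.stdGaussian d) =
      ∫ x, r * Lap φ (y + r • x) ∂(_root_.stdGaussian d) := by
  obtain ⟨χ, C, hC0, hχ, hχc, hχ1, hχt, hχd⟩ := exists_cutoff d
  have hK0 : 0 ≤ K := (norm_nonneg _).trans (hK 0)
  have hcd : Continuous (fderiv ℝ φ) := hφ.continuous_fderiv (by norm_num)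
  have hcL := continuous_Lap hφ
  have t1 : Filter.Tendsto (fun n => ∫ x, χ n x * fderiv ℝ φ (y + r • x) x ∂(_root_.stdGaussian d))
      Filter.atTop (nhds (∫ x, fderiv ℝ φ (y + r • x) x ∂(_root_.stdGaussian d))) := by
    refine tendsto_integral_of_dominated_convergence (fun x => K * ‖x‖) (fun n => ?_)
      ((stdG_integrable_norm d).const_mul K) (fun n => ae_of_all _ fun x => ?_)
      (ae_of_all _ fun x => ?_)
    · have := (hχ n).continuous
      exact (this.mul ((hcd.comp (by fun_prop)).clm_apply continuous_id)).aestronglyMeasurable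
    · rw [norm_mul, Real.norm_eq_abs]
      calc |χ n x| * ‖fderiv ℝ φ (y + r • x) x‖ ≤ 1 * ‖fderiv ℝ φ (y + r • x) x‖ := by
            gcongr; exact hχ1 n x
        _ ≤ K * ‖x‖ := by
            rw [one_mul]
            exact ContinuousLinearMap.le_of_opNorm_le _ (hK _) _
    · simpa using (hχt x).mul_const (fderiv ℝ φ (y + r • x) x)
  have t2 : Filter.Tendsto (fun n => ∫ x, (χ n x * (r * Lap φ (y + r • x)) +
        ∑ i : Fin d, fderiv ℝ φ (y + r • x) (ee i) * fderiv ℝ (χ n) x (ee i)) ∂(_root_.stdGaussian d))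
      Filter.atTop (nhds (∫ x, r * Lap φ (y + r • x) ∂(_root_.stdGaussian d))) := by
    refine tendsto_integral_of_dominated_convergence
      (fun x => |r| * (G * (1 + (‖y‖ + |r| * ‖x‖))) + ∑ i : Fin d, K * C) (fun n => ?_)
      ?_ (fun n => ae_of_all _ fun x => ?_)
      (ae_of_all _ fun x => ?_)
    · have h1 := (hχ n).continuous
      have h2 : Continuous (fderiv ℝ (χ n)) := (hχ n).continuous_fderiv (by norm_num)
      refine Continuous.aestronglyMeasurable ?_
      refine (h1.mul (continuous_const.mul (hcL.comp (by fun_prop)))).add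
        (continuous_finsetSum _ fun i _ => ?_)
      exact ((hcd.comp (by fun_prop)).clm_apply continuous_const).mul
        (h2.clm_apply continuous_const)
    · refine Integrable.add (Integrable.const_mul (Integrable.const_mul ?_ _) _) (integrable_const _)
      exact (integrable_const _).add ((integrable_const _).add ((stdG_integrable_norm d).const_mul _))
    · refine (norm_add_le _ _).trans (add_le_add ?_ ?_)
      · rw [norm_mul, norm_mul, Real.norm_eq_abs, Real.norm_eq_abs, Real.norm_eq_abs]
        have h3 : |Lap φ (y + r • x)| ≤ G * (1 + (‖y‖ + |r| * ‖x‖)) := by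
          refine (hG _).trans ?_
          gcongr
          refine (norm_add_le _ _).trans ?_
          rw [norm_smul, Real.norm_eq_abs]
        calc |χ n x| * (|r| * |Lap φ (y + r • x)|) ≤ 1 * (|r| * (G * (1 + (‖y‖ + |r| * ‖x‖)))) := by
              gcongr
              exact hχ1 n x
          _ = _ := one_mul _
      · refine (norm_sum_le _ _).trans (Finset.sum_le_sum fun i _ => ?_)
        rw [norm_mul]
        have a1 : ‖fderiv ℝ φ (y + r • x) (ee i)‖ ≤ K := by
          have := ContinuousLinearMap.le_of_opNorm_le _ (hK (y + r • x)) (ee i)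
          rwa [ee_norm, mul_one] at this
        have a2 : ‖fderiv ℝ (χ n) x (ee i)‖ ≤ C := by
          have := ContinuousLinearMap.le_of_opNorm_le _ (hχd n x) (ee i)
          rw [ee_norm, mul_one] at this
          refine this.trans (div_le_self hC0 (by linarith [(Nat.cast_nonneg n : (0:ℝ) ≤ n)]))
        exact mul_le_mul a1 a2 (norm_nonneg _) hK0
    · have h1 : Filter.Tendsto (fun n => ∑ i : Fin d, fderiv ℝ φ (y + r • x) (ee i) * fderiv ℝ (χ n) x (ee i))
          Filter.atTop (nhds (∑ i : Fin d, fderiv ℝ φ (y + r • x) (ee i) * 0)) := by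
        refine tendsto_finsetSum _ fun i _ => Filter.Tendsto.const_mul _ ?_
        refine squeeze_zero_norm (a := fun n : ℕ => C * (1 / ((n:ℝ) + 1))) (fun n => ?_) ?_
        · have := ContinuousLinearMap.le_of_opNorm_le _ (hχd n x) (ee i)
          rw [ee_norm, mul_one] at this
          rw [mul_one_div]; exact this
        · simpa using (tendsto_one_div_add_atTop_nhds_zero_nat (𝕜 := ℝ)).const_mul C
      simpa using ((hχt x).mul_const (r * Lap φ (y + r • x))).add h1
  refine tendsto_nhds_unique t1 ?_
  refine t2.congr fun n => ?_
  exact (stein_cut hφ (hχ n) (hχc n) y r).symm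

lemma heat_scalar {d : ℕ} {φ : Euc d → ℝ} (hφ : ContDiff ℝ 2 φ) {K G : ℝ}
    (hK : ∀ x, ‖fderiv ℝ φ x‖ ≤ K) (hG : ∀ x, |Lap φ x| ≤ G * (1 + ‖x‖)) (hG0 : 0 ≤ G)
    (y : Euc d) {r : ℝ} (hr : 0 ≤ r) :
    |∫ x, φ (y + r • x) ∂(_root_.stdGaussian d) - φ y| ≤ r ^ 2 * (G * (1 + ‖y‖ + r * √d)) := by
  have hK0 : 0 ≤ K := (norm_nonneg _).trans (hK 0)
  have hcd : Continuous (fderiv ℝ φ) := hφ.continuous_fderiv (by norm_num)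
  have hlip : ∀ x, |φ x| ≤ |φ 0| + K * ‖x‖ := by
    intro x
    have := Convex.norm_image_sub_le_of_norm_fderiv_le (𝕜 := ℝ) (f := φ) (s := Set.univ) (C := K)
      (fun z _ => hφ.differentiable (by norm_num) z) (fun z _ => hK z) convex_univ
      (Set.mem_univ 0) (Set.mem_univ x)
    rw [sub_zero, Real.norm_eq_abs] at this
    have h2 := abs_sub_abs_le_abs_sub (φ x) (φ 0)
    linarith
  set F : ℝ → ℝ := fun s => ∫ x, φ (y + s • x) ∂(_root_.stdGaussian d) with hF
  have hderiv : ∀ s, HasDerivAt F (∫ x, fderiv ℝ φ (y + s • x) x ∂(_root_.stdGaussian d)) s := by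
    intro s
    refine (hasDerivAt_integral_of_dominated_loc_of_deriv_le (F := fun s x => φ (y + s • x))
      (F' := fun s x => fderiv ℝ φ (y + s • x) x) (bound := fun x => K * ‖x‖) (s := Set.univ)
      Filter.univ_mem ?_ ?_ ?_ ?_ ?_ ?_).2
    · refine Filter.Eventually.of_forall fun s => ?_
      exact (hφ.continuous.comp (by fun_prop)).aestronglyMeasurable
    · have hb : Integrable (fun x : Euc d => |φ 0| + K * (‖y‖ + |s| * ‖x‖)) (_root_.stdGaussian d) :=
        (integrable_const _).add (((integrable_const _).add
          ((stdG_integrable_norm d).const_mul _)).const_mul _)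
      refine hb.mono' (hφ.continuous.comp (by fun_prop)).aestronglyMeasurable
        (ae_of_all _ fun x => ?_)
      refine (hlip _).trans ?_
      gcongr
      refine (norm_add_le _ _).trans ?_
      rw [norm_smul, Real.norm_eq_abs]
    · exact ((hcd.comp (by fun_prop)).clm_apply continuous_id).aestronglyMeasurable
    · exact ae_of_all _ fun x s _ => ContinuousLinearMap.le_of_opNorm_le _ (hK _) _
    · exact (stdG_integrable_norm d).const_mul K
    · refine ae_of_all _ fun x s _ => ?_
      have h1 : HasDerivAt (fun s : ℝ => y + s • x) x s := by
        simpa using ((hasDerivAt_id s).smul_const x).const_add y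
      exact (hφ.differentiable (by norm_num) (y + s • x)).hasFDerivAt.comp_hasDerivAt s h1
  have hbound : ∀ s ∈ Set.Icc 0 r, ‖∫ x, fderiv ℝ φ (y + s • x) x ∂(_root_.stdGaussian d)‖
      ≤ r * (G * (1 + ‖y‖ + r * √d)) := by
    intro s hs
    rw [stein_full hφ hK hG hG0]
    have hb : Integrable (fun x : Euc d => r * (G * (1 + ‖y‖ + r * ‖x‖))) (_root_.stdGaussian d) :=
      (((integrable_const _).add ((stdG_integrable_norm d).const_mul _)).const_mul _).const_mul _
    refine (norm_integral_le_of_norm_le hb (ae_of_all _ fun x => ?_)).trans ?_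
    · rw [norm_mul, Real.norm_of_nonneg hs.1, Real.norm_eq_abs]
      have h3 : |Lap φ (y + s • x)| ≤ G * (1 + ‖y‖ + r * ‖x‖) := by
        refine (hG _).trans ?_
        rw [add_assoc]
        gcongr
        refine (norm_add_le _ _).trans ?_
        rw [norm_smul, Real.norm_of_nonneg hs.1]
        gcongr
        exact hs.2
      exact mul_le_mul hs.2 h3 (abs_nonneg _) hr
    · rw [integral_const_mul, integral_const_mul, integral_add (integrable_const _)
        ((stdG_integrable_norm d).const_mul _), integral_const_mul]
      simp only [integral_const, probReal_univ, one_smul]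
      have := stdG_integral_norm_le d
      gcongr
  have hmv := (convex_Icc (0:ℝ) r).norm_image_sub_le_of_norm_hasDerivWithin_le
    (fun s _ => (hderiv s).hasDerivWithinAt) hbound
    (Set.left_mem_Icc.mpr hr) (Set.right_mem_Icc.mpr hr)
  have hF0 : F 0 = φ y := by simp [hF]
  rw [hF0, sub_zero, Real.norm_of_nonneg hr, Real.norm_eq_abs] at hmv
  refine hmv.trans (le_of_eq ?_)
  ring

lemma Lap_dir {d : ℕ} {f : Euc d → ℝ} (hf : ContDiff ℝ 3 f) (v x : Euc d) :
    Lap (fun y => fderiv ℝ f y v) x = fderiv ℝ (lapl f) x v := by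
  have hc2 : ∀ v : Euc d, ContDiff ℝ 2 (fun y => fderiv ℝ f y v) := fun v =>
    (hf.fderiv_right (m := 2) (by norm_num)).clm_apply contDiff_const
  have hd : Differentiable ℝ (fderiv ℝ f) :=
    (hf.fderiv_right (m := 2) (by norm_num)).differentiable (by norm_num)
  have happ : ∀ u v y : Euc d, fderiv ℝ (fun y => fderiv ℝ f y v) y u = fderiv ℝ (fderiv ℝ f) y u v := by
    intro u v y
    have := ((hd y).hasFDerivAt.clm_apply (hasFDerivAt_const v y)).fderiv
    rw [this]; simp
  have hsym : ∀ u v y : Euc d, fderiv ℝ (fun y => fderiv ℝ f y v) y u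
      = fderiv ℝ (fun y => fderiv ℝ f y u) y v := by
    intro u v y
    rw [happ, happ]
    exact (hf.contDiffAt.isSymmSndFDerivAt (by simp; norm_num)) u v
  have happ2 : ∀ {φ : Euc d → ℝ}, ContDiff ℝ 2 φ → ∀ u v y : Euc d,
      fderiv ℝ (fun y => fderiv ℝ φ y v) y u = fderiv ℝ (fderiv ℝ φ) y u v := by
    intro φ hφ u v y
    have hd : Differentiable ℝ (fderiv ℝ φ) :=
      (hφ.fderiv_right (m := 1) (by norm_num)).differentiable (by norm_num)
    have := ((hd y).hasFDerivAt.clm_apply (hasFDerivAt_const v y)).fderiv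
    rw [this]; simp
  have hl : lapl f = fun y => ∑ i : Fin d, fderiv ℝ (fun y => fderiv ℝ f y (ee i)) y (ee i) := by
    funext y
    unfold lapl
    refine Finset.sum_congr rfl fun i _ => ?_
    rw [happ, iteratedFDeriv_two_apply]; simp
  have hdd : ∀ i : Fin d, DifferentiableAt ℝ
      (fun y => fderiv ℝ (fun y => fderiv ℝ f y (ee i)) y (ee i)) x := fun i =>
    (contDiff_dir (hc2 (ee i)) (ee i)).differentiable (by norm_num) x
  rw [hl, fderiv_fun_sum (fun i _ => hdd i), ContinuousLinearMap.sum_apply, Lap]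
  refine Finset.sum_congr rfl fun i _ => ?_
  have : (fun y => fderiv ℝ (fun y => fderiv ℝ f y v) y (ee i))
    = fun y => fderiv ℝ (fun y => fderiv ℝ f y (ee i)) y v := by
    funext y; exact hsym _ _ _
  rw [this, happ2 (hc2 _), happ2 (hc2 _)]
  exact ((hc2 (ee i)).contDiffAt.isSymmSndFDerivAt (by simp)) _ _

lemma gradient_integrable {d : ℕ} {f : Euc d → ℝ} {m L : ℝ} (hm : 0 < m) (hmL : m ≤ L)
    (hf : ContDiff ℝ 3 f) (hH : HessianBounds m L f) (hg0 : gradient f 0 = 0) (y : Euc d) (r : ℝ) :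
    Integrable (fun x => gradient f (y + r • x)) (_root_.stdGaussian d) := by
  have hc : Continuous (gradient f) := (contDiff_gradient hf).continuous
  have hb : Integrable (fun x : Euc d => L * (‖y‖ + |r| * ‖x‖)) (_root_.stdGaussian d) :=
    ((integrable_const _).add ((stdG_integrable_norm d).const_mul _)).const_mul _
  refine hb.mono' (hc.comp (by fun_prop)).aestronglyMeasurable (ae_of_all _ fun x => ?_)
  have := gradient_lip hm hmL hf hH (y + r • x) 0
  rw [hg0, sub_zero, sub_zero] at this
  refine this.trans ?_
  have : 0 ≤ L := by linarith
  gcongr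
  refine (norm_add_le _ _).trans ?_
  rw [norm_smul, Real.norm_eq_abs]

lemma heat_grad {d : ℕ} {f : Euc d → ℝ} {m L G : ℝ} (hm : 0 < m) (hmL : m ≤ L)
    (hf : ContDiff ℝ 3 f) (hH : HessianBounds m L f) (hg0 : gradient f 0 = 0) (hG : 0 < G)
    (hlapl : ∀ x : Euc d, ‖gradient (lapl f) x‖ ≤ G * (1 + ‖x‖)) (y : Euc d) {r : ℝ} (hr : 0 ≤ r) :
    ‖∫ x, gradient f (y + r • x) ∂(_root_.stdGaussian d) - gradient f y‖
      ≤ r ^ 2 * (G * (1 + ‖y‖ + r * √d)) := by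
  set w := ∫ x, gradient f (y + r • x) ∂(_root_.stdGaussian d) - gradient f y with hw
  have hL0 : 0 ≤ L := by linarith
  have hc2 : ∀ v : Euc d, ContDiff ℝ 2 (fun y => fderiv ℝ f y v) := fun v =>
    (hf.fderiv_right (m := 2) (by norm_num)).clm_apply contDiff_const
  have key := heat_scalar (hc2 w) (K := L * ‖w‖) (G := G * ‖w‖) (fun x => ?_) (fun x => ?_)
    (by positivity) y hr
  · have e : ∫ x, fderiv ℝ f (y + r • x) w ∂(_root_.stdGaussian d) - fderiv ℝ f y w = ‖w‖ ^ 2 := by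
      simp_rw [← inner_gradient_eq]
      have h1 : ∫ x, inner ℝ (gradient f (y + r • x)) w ∂(_root_.stdGaussian d)
          = inner ℝ (∫ x, gradient f (y + r • x) ∂(_root_.stdGaussian d)) w := by
        simp_rw [real_inner_comm w]
        exact integral_inner (gradient_integrable hm hmL hf hH hg0 y r) w
      rw [h1, ← inner_sub_left, ← hw, real_inner_self_eq_norm_sq]
    rw [e, abs_of_nonneg (sq_nonneg _)] at key
    rcases (norm_nonneg w).eq_or_lt with h0 | h0
    · rw [← h0]; positivity
    · refine le_of_mul_le_mul_right ?_ h0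
      calc ‖w‖ * ‖w‖ = ‖w‖ ^ 2 := by ring
        _ ≤ _ := key
        _ = _ := by ring
  · refine ContinuousLinearMap.opNorm_le_bound _ (by positivity) fun u => ?_
    have : fderiv ℝ (fun y => fderiv ℝ f y w) x u = inner ℝ (fderiv ℝ (gradient f) x u) w := by
      rw [inner_hess_eq' hf]
      have hd : Differentiable ℝ (fderiv ℝ f) :=
        (hf.fderiv_right (m := 2) (by norm_num)).differentiable (by norm_num)
      have := ((hd x).hasFDerivAt.clm_apply (hasFDerivAt_const w x)).fderiv
      rw [this]; simp
    rw [this]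
    refine (norm_inner_le_norm _ _).trans ?_
    have h3 := ContinuousLinearMap.le_of_opNorm_le _ (hess_norm_le hm hmL hf hH x) u
    nlinarith [norm_nonneg w]
  · rw [Lap_dir hf, ← inner_gradient_eq]
    refine (abs_real_inner_le_norm _ _).trans ?_
    have := hlapl x
    nlinarith [norm_nonneg w]

end

section

/-- The `L²` norm as a real number. -/
def N2 {X : Type*} [MeasurableSpace X] {d : ℕ} (F : X → Euc d) (Q : Measure X) : ℝ :=
  (eLpNorm F 2 Q).toReal

section N2sec
variable {X Y : Type*} [MeasurableSpace X] [MeasurableSpace Y] {d : ℕ} {Q : Measure X}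
  {F F' : X → Euc d}

lemma N2_nonneg : 0 ≤ N2 F Q := ENNReal.toReal_nonneg

lemma N2_sq (hF : MemLp F 2 Q) : N2 F Q ^ 2 = ∫ x, ‖F x‖ ^ 2 ∂Q := by
  unfold N2
  rw [hF.eLpNorm_eq_integral_rpow_norm (by norm_num) (by norm_num)]
  have h0 : 0 ≤ ∫ x, ‖F x‖ ^ 2 ∂Q := integral_nonneg fun x => by positivity
  simp only [ENNReal.toReal_ofNat, Real.rpow_ofNat]
  rw [ENNReal.toReal_ofReal (by positivity), ← Real.rpow_natCast, ← Real.rpow_mul h0]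
  norm_num

lemma int_sq2 (hF : MemLp F 2 Q) : Integrable (fun x => ‖F x‖ ^ 2) Q :=
  hF.integrable_norm_pow (by norm_num)

lemma N2_add_le (hF : MemLp F 2 Q) (hF' : MemLp F' 2 Q) :
    N2 (fun x => F x + F' x) Q ≤ N2 F Q + N2 F' Q := by
  unfold N2
  rw [← ENNReal.toReal_add hF.eLpNorm_ne_top hF'.eLpNorm_ne_top]
  exact ENNReal.toReal_mono (ENNReal.add_ne_top.mpr ⟨hF.eLpNorm_ne_top, hF'.eLpNorm_ne_top⟩)
    (eLpNorm_add_le hF.1 hF'.1 (by norm_num))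

lemma N2_sub_le (hF : MemLp F 2 Q) (hF' : MemLp F' 2 Q) :
    N2 (fun x => F x - F' x) Q ≤ N2 F Q + N2 F' Q := by
  unfold N2
  rw [← ENNReal.toReal_add hF.eLpNorm_ne_top hF'.eLpNorm_ne_top]
  exact ENNReal.toReal_mono (ENNReal.add_ne_top.mpr ⟨hF.eLpNorm_ne_top, hF'.eLpNorm_ne_top⟩)
    (eLpNorm_sub_le hF.1 hF'.1 (by norm_num))

/-- Comparison of `L²` norms. -/
lemma N2_le_mul (hF' : MemLp F' 2 Q) {c : ℝ} (hc : 0 ≤ c)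
    (h : ∀ x, ‖F x‖ ≤ c * ‖F' x‖) : N2 F Q ≤ c * N2 F' Q := by
  unfold N2
  have := eLpNorm_le_mul_eLpNorm_of_ae_le_mul (f := F) (g := F') (c := c) (μ := Q)
    (ae_of_all _ h) 2
  refine (ENNReal.toReal_mono (ENNReal.mul_ne_top ENNReal.ofReal_ne_top hF'.eLpNorm_ne_top) this).trans ?_
  rw [ENNReal.toReal_mul, ENNReal.toReal_ofReal hc]

lemma N2_smul (c : ℝ) : N2 (fun x => c • F x) Q = |c| * N2 F Q := by
  unfold N2
  have := eLpNorm_const_smul c F 2 Q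
  change (eLpNorm (c • F) 2 Q).toReal = _
  rw [this, ENNReal.toReal_mul]
  simp

lemma N2_map {T : Y → X} {Q : Measure Y} (hT : Measurable T) (hF : AEStronglyMeasurable F (Q.map T)) :
    N2 F (Q.map T) = N2 (fun y => F (T y)) Q := by
  unfold N2
  rw [eLpNorm_map_measure hF hT.aemeasurable]; rfl

lemma memLp_map {T : Y → X} {Q : Measure Y} (hT : Measurable T) (hF : AEStronglyMeasurable F (Q.map T)) :
    MemLp F 2 (Q.map T) ↔ MemLp (fun y => F (T y)) 2 Q := 
  memLp_map_measure_iff hF hT.aemeasurable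

lemma N2_fst {R : Measure Y} [IsProbabilityMeasure R] [SFinite Q] (hF : AEStronglyMeasurable F Q) :
    N2 (fun p : X × Y => F p.1) (Q.prod R) = N2 F Q := by
  have : (Q.prod R).map Prod.fst = Q := by simp
  rw [← N2_map measurable_fst (by rwa [this]), this]

lemma memLp_fst {R : Measure Y} [IsProbabilityMeasure R] [SFinite Q] (hF : MemLp F 2 Q) :
    MemLp (fun p : X × Y => F p.1) 2 (Q.prod R) := hF.comp_fst R

lemma integrable_inner2 (hF : MemLp F 2 Q) (hF' : MemLp F' 2 Q) :
    Integrable (fun x => inner ℝ (F x) (F' x)) Q := by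
  refine ((int_sq2 hF).add (int_sq2 hF')).mono' (hF.1.inner hF'.1) (ae_of_all _ fun x => ?_)
  refine (norm_inner_le_norm _ _).trans ?_
  simp only [Pi.add_apply]
  nlinarith [sq_nonneg (‖F x‖ - ‖F' x‖), sq_nonneg (‖F x‖), sq_nonneg ‖F' x‖]

lemma cs_mul (hF : MemLp F 2 Q) (hF' : MemLp F' 2 Q) :
    ∫ x, ‖F x‖ * ‖F' x‖ ∂Q ≤ N2 F Q * N2 F' Q := by
  have h := integral_mul_norm_le_Lp_mul_Lq (μ := Q) (f := F) (g := F') (p := 2) (q := 2)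
    ⟨by norm_num, by norm_num, by norm_num⟩ (by simpa using hF) (by simpa using hF')
  refine h.trans (le_of_eq ?_)
  have hh : ∀ {F : X → Euc d}, MemLp F 2 Q → (∫ x, ‖F x‖ ^ (2:ℝ) ∂Q) ^ ((1:ℝ)/2) = N2 F Q := by
    intro F hF
    simp only [Real.rpow_ofNat]
    rw [← N2_sq hF, ← Real.sqrt_eq_rpow, Real.sqrt_sq N2_nonneg]
  rw [hh hF, hh hF']

lemma cs_inner (hF : MemLp F 2 Q) (hF' : MemLp F' 2 Q) :
    |∫ x, inner ℝ (F x) (F' x) ∂Q| ≤ N2 F Q * N2 F' Q := by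
  refine le_trans ?_ (cs_mul hF hF')
  rw [← Real.norm_eq_abs]
  refine norm_integral_le_of_norm_le ?_ (ae_of_all _ fun x => norm_inner_le_norm (𝕜 := ℝ) _ _)
  refine ((int_sq2 hF).add (int_sq2 hF')).mono' (hF.1.norm.mul hF'.1.norm) (ae_of_all _ fun x => ?_)
  rw [Real.norm_of_nonneg (by positivity)]
  simp only [Pi.add_apply]
  nlinarith [sq_nonneg (‖F x‖ - ‖F' x‖), sq_nonneg (‖F x‖), sq_nonneg ‖F' x‖]

lemma N2_sub_sq (hF : MemLp F 2 Q) (hF' : MemLp F' 2 Q) :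
    N2 (fun x => F x - F' x) Q ^ 2 = N2 F Q ^ 2 - 2 * ∫ x, inner ℝ (F x) (F' x) ∂Q + N2 F' Q ^ 2 := by
  have h0 : MemLp (fun x => F x - F' x) 2 Q := hF.sub hF'
  rw [N2_sq h0, N2_sq hF, N2_sq hF']
  simp only [norm_sub_sq_real]
  have h1 := integrable_inner2 hF hF'
  have h2 : Integrable (fun x => ‖F x‖ ^ 2 - 2 * inner ℝ (F x) (F' x)) Q :=
    (int_sq2 hF).sub (h1.const_mul 2)
  rw [integral_add h2 (int_sq2 hF'),
    integral_sub (int_sq2 hF) (h1.const_mul 2), integral_const_mul]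

lemma N2_le_of_sq {c : ℝ} (hc : 0 ≤ c) (hF : MemLp F 2 Q) (h : ∫ x, ‖F x‖ ^ 2 ∂Q ≤ c ^ 2) :
    N2 F Q ≤ c := by
  rw [← N2_sq hF] at h
  exact (sq_le_sq₀ N2_nonneg hc).mp h

end N2sec
end

section

/-- The uniform measure on `[0,1]`. -/
def unif : Measure ℝ := volume.restrict (Set.Icc 0 1)

instance unif_prob : IsProbabilityMeasure unif := ⟨by simp [unif]⟩

/-- Noise for a Metropolis step. -/
def nuW (d : ℕ) : Measure (Euc d × ℝ) := (_root_.stdGaussian d).prod unif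

instance nuW_prob (d : ℕ) : IsProbabilityMeasure (nuW d) := by unfold nuW; infer_instance

/-- log of the joint density of (state, proposal). -/
def qlog {d : ℕ} (f : Euc d → ℝ) (δ : ℝ) (x y : Euc d) : ℝ :=
  -f x - ‖y - (x - δ • gradient f x)‖ ^ 2 / (4 * δ)

/-- Langevin proposal. -/
def prp {d : ℕ} (f : Euc d → ℝ) (δ : ℝ) (z η : Euc d) : Euc d :=
  (z - δ • gradient f z) + √(2 * δ) • η

/-- acceptance probability. -/
def acc {d : ℕ} (f : Euc d → ℝ) (δ : ℝ) (x y : Euc d) : ℝ :=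
  min 1 (rexp (qlog f δ y x - qlog f δ x y))

/-- The MALA transition. -/
def mala {d : ℕ} (f : Euc d → ℝ) (δ : ℝ) (p : Euc d × (Euc d × ℝ)) : Euc d :=
  if p.2.2 ≤ acc f δ p.1 (prp f δ p.1 p.2.1) then prp f δ p.1 p.2.1 else p.1

lemma qlog_cont {d : ℕ} {f : Euc d → ℝ} (hf : ContDiff ℝ 3 f) (δ : ℝ) : Continuous (fun p : Euc d × Euc d => qlog f δ p.1 p.2) := by
  have h1 := hf.continuous
  have h2 := (contDiff_gradient hf).continuous
  unfold qlog
  fun_prop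

lemma prp_cont {d : ℕ} {f : Euc d → ℝ} (hf : ContDiff ℝ 3 f) (δ : ℝ) : Continuous (fun p : Euc d × Euc d => prp f δ p.1 p.2) := by
  have h2 := (contDiff_gradient hf).continuous
  unfold prp
  fun_prop

lemma acc_cont {d : ℕ} {f : Euc d → ℝ} (hf : ContDiff ℝ 3 f) (δ : ℝ) : Continuous (fun p : Euc d × Euc d => acc f δ p.1 p.2) := by
  have h1 := qlog_cont hf δ
  have h2 : Continuous (fun p : Euc d × Euc d => qlog f δ p.2 p.1) :=
    h1.comp (continuous_snd.prodMk continuous_fst)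
  unfold acc
  fun_prop

lemma mala_meas {d : ℕ} {f : Euc d → ℝ} (hf : ContDiff ℝ 3 f) (δ : ℝ) : Measurable (mala f δ) := by
  have h1 : Continuous (fun p : Euc d × (Euc d × ℝ) => prp f δ p.1 p.2.1) :=
    (prp_cont hf δ).comp (continuous_fst.prodMk (continuous_fst.comp continuous_snd))
  have h2 : Continuous (fun p : Euc d × (Euc d × ℝ) => acc f δ p.1 (prp f δ p.1 p.2.1)) :=
    (acc_cont hf δ).comp (continuous_fst.prodMk h1)
  unfold mala
  refine Measurable.ite ?_ h1.measurable measurable_fst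
  exact measurableSet_le (by fun_prop) h2.measurable

lemma acc_nonneg {d : ℕ} (f : Euc d → ℝ) (δ : ℝ) (x y : Euc d) : 0 ≤ acc f δ x y :=
  le_min zero_le_one (Real.exp_pos _).le

lemma acc_le_one {d : ℕ} (f : Euc d → ℝ) (δ : ℝ) (x y : Euc d) : acc f δ x y ≤ 1 := min_le_left _ _

lemma lintegral_unif_ite (a : ℝ) (h0 : 0 ≤ a) (h1 : a ≤ 1) (A B : ℝ≥0∞) :
    ∫⁻ u, (if u ≤ a then A else B) ∂unif = ENNReal.ofReal a * A + ENNReal.ofReal (1 - a) * B := by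
  have hs : MeasurableSet {u : ℝ | u ≤ a} := measurableSet_Iic
  have e : (fun u : ℝ => if u ≤ a then A else B) =
      fun u => Set.indicator (Set.Iic a) (fun _ => A) u + Set.indicator (Set.Iic a)ᶜ (fun _ => B) u := by
    funext u
    by_cases h : u ≤ a
    · simp [h]
    · simp [h, lt_of_not_ge h]
  rw [e, lintegral_add_left (measurable_const.indicator measurableSet_Iic),
    lintegral_indicator measurableSet_Iic, lintegral_indicator measurableSet_Iic.compl]
  simp only [lintegral_const, unif, Measure.restrict_apply MeasurableSet.univ,
    Set.univ_inter]
  rw [Measure.restrict_apply measurableSet_Iic, Measure.restrict_apply measurableSet_Iic.compl]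
  have e1 : Set.Iic a ∩ Set.Icc (0:ℝ) 1 = Set.Icc 0 a := by
    ext u; simp only [Set.mem_inter_iff, Set.mem_Iic, Set.mem_Icc]
    constructor
    · rintro ⟨x, y, z⟩; exact ⟨y, x⟩
    · rintro ⟨x, y⟩; exact ⟨y, x, y.trans h1⟩
  have e2 : (Set.Iic a)ᶜ ∩ Set.Icc (0:ℝ) 1 = Set.Ioc a 1 := by
    ext u; simp only [Set.mem_inter_iff, Set.mem_compl_iff, Set.mem_Iic, Set.mem_Icc, Set.mem_Ioc, not_le]
    constructor
    · rintro ⟨x, y, z⟩; exact ⟨x, z⟩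
    · rintro ⟨x, y⟩; exact ⟨x, h0.trans x.le, y⟩
  rw [e1, e2, Real.volume_Icc, Real.volume_Ioc, sub_zero]
  ring

/-- change of variables in the Gaussian integral -/
lemma lintegral_affine {d : ℕ} (a : Euc d) {r : ℝ} (hr : 0 < r) {F : Euc d → ℝ≥0∞} (hF : Measurable F) :
    ∫⁻ x, F (a + r • x) ∂(_root_.stdGaussian d) =
      ENNReal.ofReal (gK d * |(r ^ d)⁻¹|) *
        ∫⁻ y, ENNReal.ofReal (rexp (-(1/2) * ‖r⁻¹ • (y - a)‖ ^ 2)) * F y := by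
  have hgm : Measurable (fun x : Euc d => ENNReal.ofReal (gdens d x)) :=
    (gdens_cont d).measurable.ennreal_ofReal
  rw [stdG_density, lintegral_withDensity_eq_lintegral_mul _ hgm (by fun_prop)]
  set H : Euc d → ℝ≥0∞ := fun y => ENNReal.ofReal (gdens d (r⁻¹ • (y - a))) * F y with hH
  have hHm : Measurable H := (hgm.comp (by fun_prop)).mul hF
  have e1 : ∀ x, ((fun x : Euc d => ENNReal.ofReal (gdens d x)) * fun x => F (a + r • x)) x
      = H (a + r • x) := by
    intro x
    simp [hH, smul_smul, inv_mul_cancel₀ hr.ne']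
  simp_rw [e1]
  have e2 : ∫⁻ x, H (a + r • x) = ENNReal.ofReal |(r ^ d)⁻¹| * ∫⁻ y, H y := by
    have h1 := lintegral_map (μ := (volume : Measure (Euc d))) (f := fun y => H (a + y))
      (g := fun x => r • x) (by fun_prop) (by fun_prop)
    rw [← h1]
    have h2 := Measure.map_addHaar_smul (volume : Measure (Euc d)) hr.ne'
    rw [h2, lintegral_smul_measure, lintegral_add_left_eq_self]
    simp
  rw [e2, mul_comm (gK d), ENNReal.ofReal_mul (abs_nonneg _), mul_assoc]
  congr 1
  rw [← lintegral_const_mul' _ _ ENNReal.ofReal_ne_top]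
  congr 1
  funext y
  simp only [hH, gdens]
  rw [ENNReal.ofReal_mul (gK_pos d).le, mul_assoc]

/-- joint density of (state, accepted proposal) is symmetric. -/
lemma exp_mul_acc {d : ℕ} (f : Euc d → ℝ) (δ : ℝ) (x y : Euc d) :
    rexp (qlog f δ x y) * acc f δ x y = min (rexp (qlog f δ x y)) (rexp (qlog f δ y x)) := by
  unfold acc
  rw [mul_min_of_nonneg _ _ (Real.exp_pos _).le, mul_one, ← Real.exp_add]
  congr 2; ring

lemma acc_balance {d : ℕ} {f : Euc d → ℝ} (hf : ContDiff ℝ 3 f) {δ : ℝ} (hδ : 0 < δ)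
    {μ : Measure (Euc d)} (hμ : IsGibbs f μ) : ∃ C : ℝ≥0∞, ∀ H : Euc d → Euc d → ℝ≥0∞,
      Measurable (Function.uncurry H) →
      ∫⁻ z, ∫⁻ η, ENNReal.ofReal (acc f δ z (prp f δ z η)) * H z (prp f δ z η)
        ∂(_root_.stdGaussian d) ∂μ = C * ∫⁻ z, ∫⁻ y, 
          ENNReal.ofReal (min (rexp (qlog f δ z y)) (rexp (qlog f δ y z))) * H z y := by
  obtain ⟨hp, c, hc0, hct, hμe⟩ := hμ
  set r := √(2 * δ) with hr
  have hr0 : 0 < r := Real.sqrt_pos.mpr (by linarith)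
  set C1 := ENNReal.ofReal (gK d * |(r ^ d)⁻¹|) with hC1
  refine ⟨c * C1, fun H hH => ?_⟩
  have hacc := (acc_cont hf δ).measurable
  have hHm : ∀ z, Measurable (H z) := fun z => hH.comp measurable_prodMk_left
  have haccz : ∀ z, Measurable (fun y => acc f δ z y) := fun z => hacc.comp measurable_prodMk_left
  have h1 : ∀ z, ∫⁻ η, ENNReal.ofReal (acc f δ z (prp f δ z η)) * H z (prp f δ z η)
        ∂(_root_.stdGaussian d) = C1 * ∫⁻ y, ENNReal.ofReal (rexp (-(1/2) * ‖r⁻¹ • (y - (z - δ • gradient f z))‖ ^ 2)) *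
          (ENNReal.ofReal (acc f δ z y) * H z y) := by
    intro z
    exact lintegral_affine (z - δ • gradient f z) hr0 ((haccz z).ennreal_ofReal.mul (hHm z))
  simp_rw [h1]
  have hfm : Measurable (fun x => ENNReal.ofReal (rexp (-f x))) := by
    have := hf.continuous.measurable
    fun_prop
  have hgm : Continuous (gradient f) := (contDiff_gradient hf).continuous
  have hkm : Measurable (fun p : Euc d × Euc d => ENNReal.ofReal (rexp (-(1/2) * ‖r⁻¹ • (p.2 - (p.1 - δ • gradient f p.1))‖ ^ 2)) *
          (ENNReal.ofReal (acc f δ p.1 p.2) * H p.1 p.2)) := by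
    refine Measurable.mul ?_ (hacc.ennreal_ofReal.mul hH)
    refine Measurable.ennreal_ofReal (Continuous.measurable ?_)
    fun_prop
  rw [hμe, lintegral_smul_measure, lintegral_withDensity_eq_lintegral_mul _ hfm
    (hkm.lintegral_prod_right'.const_mul C1), smul_eq_mul, mul_assoc]
  congr 1
  have h2 : ∀ z, ((fun x => ENNReal.ofReal (rexp (-f x))) * fun z => C1 * ∫⁻ y, ENNReal.ofReal (rexp (-(1/2) * ‖r⁻¹ • (y - (z - δ • gradient f z))‖ ^ 2)) *
          (ENNReal.ofReal (acc f δ z y) * H z y)) z = C1 * ∫⁻ y, 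
          ENNReal.ofReal (min (rexp (qlog f δ z y)) (rexp (qlog f δ y z))) * H z y := by
    intro z
    simp only [Pi.mul_apply]
    rw [mul_left_comm, ← lintegral_const_mul' _ _ ENNReal.ofReal_ne_top]
    congr 2
    funext y
    rw [← mul_assoc, ← mul_assoc, ← ENNReal.ofReal_mul (Real.exp_pos _).le, ← Real.exp_add,
      ← ENNReal.ofReal_mul (Real.exp_pos _).le, ← exp_mul_acc]
    congr 4
    unfold qlog
    rw [norm_smul, norm_inv, Real.norm_of_nonneg hr0.le, mul_pow, inv_pow, hr, Real.sq_sqrt (by linarith)]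
    field_simp
    ring
  simp_rw [h2]
  exact lintegral_const_mul _ (by
    have hq := (qlog_cont hf δ).measurable
    have hq2 : Measurable (fun p : Euc d × Euc d => qlog f δ p.2 p.1) := hq.comp measurable_swap
    refine Measurable.lintegral_prod_right' (f := fun p : Euc d × Euc d =>
      ENNReal.ofReal (min (rexp (qlog f δ p.1 p.2)) (rexp (qlog f δ p.2 p.1))) * H p.1 p.2) ?_
    exact (Measurable.ennreal_ofReal (hq.exp.min hq2.exp)).mul hH)

/-- MALA preserves the Gibbs measure. -/
lemma mala_inv {d : ℕ} {f : Euc d → ℝ} (hf : ContDiff ℝ 3 f) {δ : ℝ} (hδ : 0 < δ)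
    {μ : Measure (Euc d)} (hμ : IsGibbs f μ) : (μ.prod (nuW d)).map (mala f δ) = μ := by
  have hp : IsProbabilityMeasure μ := hμ.1
  obtain ⟨C, hC⟩ := acc_balance hf hδ hμ
  have hmm := mala_meas hf δ
  have hacc := (acc_cont hf δ).measurable
  have hprp := (prp_cont hf δ).measurable
  refine Measure.ext_of_lintegral _ fun ψ hψ => ?_
  have hψm : Measurable (fun p => ψ (mala f δ p)) := hψ.comp hmm
  rw [lintegral_map hψ hmm, lintegral_prod _ hψm.aemeasurable]
  have hacc' : Measurable (fun p : Euc d × Euc d => acc f δ p.1 (prp f δ p.1 p.2)) :=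
    hacc.comp (measurable_fst.prodMk hprp)
  have h1 : ∀ z, ∫⁻ w, ψ (mala f δ (z, w)) ∂(nuW d) =
      ∫⁻ η, ENNReal.ofReal (acc f δ z (prp f δ z η)) * ψ (prp f δ z η) ∂(_root_.stdGaussian d)
      + ∫⁻ η, ENNReal.ofReal (1 - acc f δ z (prp f δ z η)) * ψ z ∂(_root_.stdGaussian d) := by
    intro z
    rw [← lintegral_add_left, nuW, lintegral_prod]
    · congr 1; funext η
      rw [← lintegral_unif_ite _ (acc_nonneg _ _ _ _) (acc_le_one _ _ _ _)]
      congr 1; funext u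
      simp only [mala]
      split_ifs <;> rfl
    · exact ((hψ.comp hmm).comp measurable_prodMk_left).aemeasurable
    · exact (hacc'.comp measurable_prodMk_left).ennreal_ofReal.mul
        (hψ.comp (hprp.comp measurable_prodMk_left))
  simp_rw [h1]
  rw [lintegral_add_left]
  swap
  · exact Measurable.lintegral_prod_right' (f := fun p : Euc d × Euc d =>
      ENNReal.ofReal (acc f δ p.1 (prp f δ p.1 p.2)) * ψ (prp f δ p.1 p.2))
      (hacc'.ennreal_ofReal.mul (hψ.comp hprp))
  have h2 := hC (fun _ y => ψ y) (hψ.comp measurable_snd)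
  have h3 := hC (fun z _ => ψ z) (hψ.comp measurable_fst)
  have hq := (qlog_cont hf δ).measurable
  have hq2 : Measurable (fun p : Euc d × Euc d => qlog f δ p.2 p.1) := hq.comp measurable_swap
  have h4 : ∫⁻ z, ∫⁻ y, ENNReal.ofReal (min (rexp (qlog f δ z y)) (rexp (qlog f δ y z))) * ψ y =
      ∫⁻ z, ∫⁻ y, ENNReal.ofReal (min (rexp (qlog f δ z y)) (rexp (qlog f δ y z))) * ψ z := by
    rw [lintegral_lintegral_swap]
    · simp_rw [min_comm]
    · exact ((Measurable.ennreal_ofReal (hq.exp.min hq2.exp)).mul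
        (hψ.comp measurable_snd)).aemeasurable
  rw [h2, h4, ← h3, ← lintegral_add_left]
  · congr 1; funext z
    rw [← lintegral_add_left]
    · simp_rw [← add_mul]
      have : ∀ η, ENNReal.ofReal (acc f δ z (prp f δ z η)) + ENNReal.ofReal (1 - acc f δ z (prp f δ z η)) = 1 := by
        intro η
        rw [← ENNReal.ofReal_add (acc_nonneg _ _ _ _) (by linarith [acc_le_one f δ z (prp f δ z η)])]
        simp
      simp [this]
    · exact (hacc'.comp measurable_prodMk_left).ennreal_ofReal.mul measurable_const
  · exact Measurable.lintegral_prod_right' (f := fun p : Euc d × Euc d =>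
      ENNReal.ofReal (acc f δ p.1 (prp f δ p.1 p.2)) * ψ p.1)
      (hacc'.ennreal_ofReal.mul (hψ.comp measurable_fst))

end

section

/-- Standing assumptions. -/
structure Pot {d : ℕ} (f : Euc d → ℝ) (m L : ℝ) : Prop where
  hm : 0 < m
  hmL : m ≤ L
  hf : ContDiff ℝ 3 f
  hH : HessianBounds m L f
  hg0 : gradient f 0 = 0

namespace Pot
variable {d : ℕ} {f : Euc d → ℝ} {m L : ℝ}

lemma L_pos (P : Pot f m L) : 0 < L := P.hm.trans_le P.hmL

lemma lip (P : Pot f m L) (x y : Euc d) : ‖gradient f x - gradient f y‖ ≤ L * ‖x - y‖ :=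
  gradient_lip P.hm P.hmL P.hf P.hH x y

lemma grad_le (P : Pot f m L) (x : Euc d) : ‖gradient f x‖ ≤ L * ‖x‖ := by
  simpa [P.hg0] using P.lip x 0

lemma gcont (P : Pot f m L) : Continuous (gradient f) := (contDiff_gradient P.hf).continuous

lemma contract (P : Pot f m L) {h : ℝ} (h0 : 0 ≤ h) (hL : h * L ≤ 1) (x : Euc d) :
    ‖x - h • gradient f x‖ ≤ (1 - m * h) * ‖x‖ := by
  simpa [P.hg0] using gradient_step_contract P.hm P.hmL P.hf P.hH h0 hL x 0

lemma mono (P : Pot f m L) (x : Euc d) : m * ‖x‖ ^ 2 ≤ inner ℝ (gradient f x) x := by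
  have hL := P.L_pos
  set h := 1 / L with hh
  have h0 : 0 < h := by positivity
  have h1 : h * L = 1 := by rw [hh]; field_simp
  have hc := P.contract h0.le h1.le x
  have hmh : 0 ≤ 1 - m * h := by
    have := mul_le_mul_of_nonneg_right P.hmL h0.le
    linarith
  have hsq : ‖x - h • gradient f x‖ ^ 2 ≤ ((1 - m * h) * ‖x‖) ^ 2 := by gcongr
  rw [norm_sub_sq_real, inner_smul_right, norm_smul, Real.norm_of_nonneg h0.le] at hsq
  have hg : m * ‖x‖ ≤ ‖gradient f x‖ := by
    have := norm_sub_norm_le x (h • gradient f x)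
    rw [norm_smul, Real.norm_of_nonneg h0.le] at this
    have h3 : h * (m * ‖x‖) ≤ h * ‖gradient f x‖ := by nlinarith
    exact le_of_mul_le_mul_left h3 h0
  have hg2 : (m * ‖x‖) ^ 2 ≤ ‖gradient f x‖ ^ 2 := by
    have := P.hm
    gcongr
  rw [real_inner_comm]
  have h4 : h * (m * ‖x‖ ^ 2) ≤ h * inner ℝ x (gradient f x) := by
    have : h ^ 2 * (m * ‖x‖) ^ 2 ≤ h ^ 2 * ‖gradient f x‖ ^ 2 := by gcongr
    nlinarith
  exact le_of_mul_le_mul_left h4 h0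

lemma hasDeriv_line (P : Pot f m L) (z v : Euc d) (t : ℝ) :
    HasDerivAt (fun t : ℝ => f (z + t • v)) (inner ℝ (gradient f (z + t • v)) v) t := by
  rw [inner_gradient_eq]
  have h1 : HasDerivAt (fun s : ℝ => z + s • v) v t := by
    simpa using ((hasDerivAt_id t).smul_const v).const_add z
  exact (P.hf.differentiable (by norm_num) (z + t • v)).hasFDerivAt.comp_hasDerivAt t h1

lemma lower (P : Pot f m L) (x : Euc d) : f 0 + m / 2 * ‖x‖ ^ 2 ≤ f x := by
  have hd : ∀ t : ℝ, HasDerivAt (fun t : ℝ => f (0 + t • x) - m / 2 * ‖x‖ ^ 2 * t ^ 2)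
      (inner ℝ (gradient f (0 + t • x)) x - m / 2 * ‖x‖ ^ 2 * (2 * t)) t := by
    intro t
    have := (hasDerivAt_pow 2 t).const_mul (m / 2 * ‖x‖ ^ 2)
    exact (P.hasDeriv_line 0 x t).sub (by simpa using this)
  have hmo : MonotoneOn (fun t : ℝ => f (0 + t • x) - m / 2 * ‖x‖ ^ 2 * t ^ 2) (Set.Icc 0 1) := by
    refine monotoneOn_of_deriv_nonneg (convex_Icc 0 1)
      (fun t _ => (hd t).continuousAt.continuousWithinAt)
      (fun t _ => (hd t).differentiableAt.differentiableWithinAt) fun t ht => ?_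
    rw [interior_Icc] at ht
    rw [(hd t).deriv, zero_add]
    have h1 := P.mono (t • x)
    rw [inner_smul_right, norm_smul, Real.norm_of_nonneg ht.1.le] at h1
    have h2 : t * (m * t * ‖x‖ ^ 2) ≤ t * inner ℝ (gradient f (t • x)) x := by
      refine le_trans (le_of_eq ?_) h1; ring
    have := le_of_mul_le_mul_left h2 ht.1
    linarith
  have := hmo (Set.left_mem_Icc.mpr zero_le_one) (Set.right_mem_Icc.mpr zero_le_one) zero_le_one
  simp at this
  linarith

/-- The trapezoid error. -/
lemma trap (P : Pot f m L) (z y : Euc d) (A : Euc d →L[ℝ] Euc d) {c r : ℝ} (hc : 0 ≤ c)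
    (h : ∀ x, ‖x - z‖ ≤ r → ‖gradient f x - gradient f z - A (x - z)‖ ≤ c * ‖x - z‖)
    (hy : ‖y - z‖ ≤ r) :
    |f y - f z - 1 / 2 * inner ℝ (y - z) (gradient f z + gradient f y)| ≤ 2 * c * ‖y - z‖ ^ 2 := by
  set v := y - z with hv
  have hd : ∀ t : ℝ, HasDerivAt (fun t : ℝ => f (z + t • v) - inner ℝ (gradient f z) v * t
      - inner ℝ (A v) v / 2 * t ^ 2)
      (inner ℝ (gradient f (z + t • v)) v - inner ℝ (gradient f z) v
        - inner ℝ (A v) v / 2 * (2 * t)) t := by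
    intro t
    have h1 := (hasDerivAt_pow 2 t).const_mul (inner ℝ (A v) v / 2)
    have h2 := (hasDerivAt_id t).const_mul (inner ℝ (gradient f z) v)
    exact ((P.hasDeriv_line z v t).sub (by simpa using h2)).sub (by simpa using h1)
  have hb : ∀ t ∈ Set.Icc (0:ℝ) 1, ‖inner ℝ (gradient f (z + t • v)) v - inner ℝ (gradient f z) v
        - inner ℝ (A v) v / 2 * (2 * t)‖ ≤ c * ‖v‖ ^ 2 := by
    intro t ht
    have hn : ‖z + t • v - z‖ = t * ‖v‖ := by
      rw [add_sub_cancel_left, norm_smul, Real.norm_of_nonneg ht.1]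
    have hle : t * ‖v‖ ≤ ‖v‖ := mul_le_of_le_one_left (norm_nonneg _) ht.2
    have h1 := h (z + t • v) (by rw [hn]; exact hle.trans hy)
    rw [hn] at h1
    have e : inner ℝ (gradient f (z + t • v)) v - inner ℝ (gradient f z) v
        - inner ℝ (A v) v / 2 * (2 * t)
        = inner ℝ (gradient f (z + t • v) - gradient f z - A (z + t • v - z)) v := by
      rw [add_sub_cancel_left, map_smul, inner_sub_left, inner_sub_left, real_inner_smul_left]
      ring
    rw [e]
    refine (norm_inner_le_norm _ _).trans ?_
    calc _ ≤ (c * ‖v‖) * ‖v‖ := by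
          gcongr
          exact h1.trans (by gcongr)
      _ = _ := by ring
  have hmv := (convex_Icc (0:ℝ) 1).norm_image_sub_le_of_norm_hasDerivWithin_le
    (fun s _ => (hd s).hasDerivWithinAt) hb
    (Set.left_mem_Icc.mpr zero_le_one) (Set.right_mem_Icc.mpr zero_le_one)
  have hzv : z + v = y := by rw [hv]; abel
  simp only [one_smul, zero_smul, add_zero, hzv, mul_one, mul_zero, sub_zero, one_pow, norm_one,
    ne_eq, OfNat.ofNat_ne_zero, not_false_eq_true, zero_pow] at hmv
  have h2 := h y hy
  rw [← hv] at h2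
  have h3 : |inner ℝ (gradient f y - gradient f z - A v) v| ≤ c * ‖v‖ * ‖v‖ :=
    (abs_real_inner_le_norm _ _).trans (by gcongr)
  rw [inner_sub_left, inner_sub_left] at h3
  rw [Real.norm_eq_abs] at hmv
  rw [inner_add_right, real_inner_comm (gradient f z), real_inner_comm (gradient f y)]
  rw [abs_le] at *
  constructor <;> nlinarith [hmv.1, hmv.2, h3.1, h3.2]

/-- log acceptance defect -/
def R (f : Euc d → ℝ) (δ : ℝ) (z y : Euc d) : ℝ :=
  f y - f z - 1 / 2 * inner ℝ (y - z) (gradient f z + gradient f y)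
    + δ / 4 * (‖gradient f y‖ ^ 2 - ‖gradient f z‖ ^ 2)

lemma acc_defect (f : Euc d → ℝ) {δ : ℝ} (hδ : 0 < δ) (z y : Euc d) :
    1 - acc f δ z y ≤ |R f δ z y| := by
  have e : qlog f δ y z - qlog f δ z y = - R f δ z y := by
    unfold qlog R
    have e1 : z - (y - δ • gradient f y) = -((y - z) - δ • gradient f y) := by abel
    have e2 : y - (z - δ • gradient f z) = (y - z) + δ • gradient f z := by abel
    rw [e1, e2, norm_neg, norm_sub_sq_real, norm_add_sq_real, inner_smul_right, inner_smul_right,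
      norm_smul, norm_smul, inner_add_right, Real.norm_of_nonneg hδ.le]
    field_simp
    ring
  unfold acc
  rw [e]
  have h1 := Real.add_one_le_exp (-R f δ z y)
  rcases min_choice 1 (rexp (-R f δ z y)) with h | h <;> rw [h]
  · simp
  · linarith [le_abs_self (R f δ z y)]

lemma R_bound (P : Pot f m L) {δ : ℝ} (h0 : 0 < δ) (h1 : δ ≤ 1) (z y : Euc d)
    (A : Euc d →L[ℝ] Euc d) {c r a : ℝ} (hc : 0 ≤ c)
    (h : ∀ x, ‖x - z‖ ≤ r → ‖gradient f x - gradient f z - A (x - z)‖ ≤ c * ‖x - z‖)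
    (hy : ‖y - z‖ ≤ r) (hya : ‖y - z‖ ≤ √δ * a) (hga : ‖gradient f z‖ ≤ a) :
    |R f δ z y| ≤ δ * ((2 * c + √δ * (L * (2 + L))) * a ^ 2) := by
  have hL := P.L_pos
  have ha : 0 ≤ a := (norm_nonneg _).trans hga
  have hs0 := Real.sqrt_nonneg δ
  have hs1 : √δ ≤ 1 := Real.sqrt_le_one.mpr h1
  have hss : √δ ^ 2 = δ := Real.sq_sqrt h0.le
  have t1 := P.trap z y A hc h hy
  have t1' : 2 * c * ‖y - z‖ ^ 2 ≤ 2 * c * (δ * a ^ 2) := by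
    have : ‖y - z‖ ^ 2 ≤ (√δ * a) ^ 2 := by gcongr
    rw [mul_pow, hss] at this
    gcongr
  have hl := P.lip y z
  have hl2 : ‖gradient f y - gradient f z‖ ≤ √δ * (L * a) := by
    refine hl.trans ?_
    nlinarith
  have hl3 : ‖gradient f y‖ + ‖gradient f z‖ ≤ (2 + L) * a := by
    have h3 := norm_sub_norm_le (gradient f y) (gradient f z)
    have : √δ * (L * a) ≤ 1 * (L * a) := by gcongr
    nlinarith
  have t2 : |‖gradient f y‖ ^ 2 - ‖gradient f z‖ ^ 2| ≤ √δ * (L * a) * ((2 + L) * a) := by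
    have : ‖gradient f y‖ ^ 2 - ‖gradient f z‖ ^ 2 = (‖gradient f y‖ - ‖gradient f z‖) * (‖gradient f y‖ + ‖gradient f z‖) := by ring
    rw [this, abs_mul, abs_of_nonneg (by positivity : 0 ≤ ‖gradient f y‖ + ‖gradient f z‖)]
    have := abs_norm_sub_norm_le (gradient f y) (gradient f z)
    gcongr
    exact this.trans hl2
  unfold R
  refine (abs_add_le _ _).trans ?_
  rw [abs_mul, abs_of_nonneg (by positivity : 0 ≤ δ / 4)]
  have t3 : δ / 4 * |‖gradient f y‖ ^ 2 - ‖gradient f z‖ ^ 2| ≤ δ * (√δ * (L * a) * ((2 + L) * a)) := by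
    have : 0 ≤ √δ * (L * a) * ((2 + L) * a) := by positivity
    nlinarith [abs_nonneg (‖gradient f y‖ ^ 2 - ‖gradient f z‖ ^ 2)]
  nlinarith

end Pot
end

section

lemma eLp2_sq {X : Type*} [MeasurableSpace X] {d : ℕ} (F : X → Euc d) (Q : Measure X) :
    eLpNorm F 2 Q ^ 2 = ∫⁻ x, ‖F x‖ₑ ^ 2 ∂Q := by
  have := eLpNorm_nnreal_pow_eq_lintegral (f := F) (μ := Q) (p := 2) (by norm_num)
  simpa using this

lemma eLp2_le {X : Type*} [MeasurableSpace X] {d : ℕ} {F : X → Euc d} {Q : Measure X} {s : ℝ}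
    (hs : 0 ≤ s) (h : ∫⁻ x, ‖F x‖ₑ ^ 2 ∂Q ≤ ENNReal.ofReal (s ^ 2)) :
    eLpNorm F 2 Q ≤ ENNReal.ofReal s := by
  rw [← eLp2_sq, ENNReal.ofReal_pow hs] at h
  exact (ENNReal.pow_le_pow_left_iff (by norm_num)).mp h

namespace Pot
variable {d : ℕ} {f : Euc d → ℝ} {m L : ℝ} {μ : Measure (Euc d)}

lemma mu_fourth (P : Pot f m L) (hμ : IsGibbs f μ) : Integrable (fun x : Euc d => ‖x‖ ^ 4) μ := by
  obtain ⟨hp, c, hc0, hct, hμe⟩ := hμ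
  have hm := P.hm
  rw [hμe]
  refine Integrable.smul_measure ?_ hct
  have hfc := P.hf.continuous
  have hfm : Measurable (fun x => ENNReal.ofReal (rexp (-f x))) := by
    have := hfc.measurable
    fun_prop
  rw [integrable_withDensity_iff hfm (ae_of_all _ fun x => ENNReal.ofReal_lt_top)]
  have hb := (integrable_exp_neg_sq d (b := m / 4) (by positivity)).const_mul (rexp (-f 0) * (32 / m ^ 2))
  refine hb.mono' ?_ (ae_of_all _ fun x => ?_)
  · refine AEStronglyMeasurable.mul (by fun_prop) ?_
    exact hfm.ennreal_toReal.aestronglyMeasurable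
  · rw [ENNReal.toReal_ofReal (Real.exp_pos _).le, Real.norm_of_nonneg (by positivity)]
    have h1 : rexp (-f x) ≤ rexp (-f 0) * rexp (-(m/4) * ‖x‖ ^ 2) * rexp (-(m/4) * ‖x‖ ^ 2) := by
      rw [← Real.exp_add, ← Real.exp_add]
      apply Real.exp_le_exp.mpr
      have := P.lower x
      nlinarith
    have h2 : ‖x‖ ^ 4 * rexp (-(m/4) * ‖x‖ ^ 2) ≤ 32 / m ^ 2 := by
      have hq := Real.quadratic_le_exp_of_nonneg (x := m / 4 * ‖x‖ ^ 2) (by positivity)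
      have e : rexp (-(m/4) * ‖x‖ ^ 2) = (rexp (m / 4 * ‖x‖ ^ 2))⁻¹ := by
        rw [← Real.exp_neg]; congr 1; ring
      rw [e, ← div_eq_mul_inv, div_le_div_iff₀ (Real.exp_pos _) (by positivity)]
      have : 0 ≤ m / 4 * ‖x‖ ^ 2 := by positivity
      nlinarith
    calc ‖x‖ ^ 4 * rexp (-f x) ≤ ‖x‖ ^ 4 * (rexp (-f 0) * rexp (-(m/4) * ‖x‖ ^ 2) * rexp (-(m/4) * ‖x‖ ^ 2)) := by
          gcongr
      _ = rexp (-f 0) * (‖x‖ ^ 4 * rexp (-(m/4) * ‖x‖ ^ 2)) * rexp (-(m/4) * ‖x‖ ^ 2) := by ring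
      _ ≤ _ := by gcongr

lemma mu_memLp (P : Pot f m L) (hμ : IsGibbs f μ) : MemLp (fun x : Euc d => x) 2 μ := by
  have hp := hμ.1
  refine (memLp_two_iff_integrable_sq_norm (by fun_prop)).mpr ?_
  refine ((integrable_const 1).add (P.mu_fourth hμ)).mono' (by fun_prop) (ae_of_all _ fun x => ?_)
  rw [Real.norm_of_nonneg (by positivity)]
  simp only [Pi.add_apply]
  nlinarith [sq_nonneg (‖x‖ ^ 2 - 1)]

/-- size of the increment -/
def aa (f : Euc d → ℝ) (p : Euc d × Euc d) : ℝ := ‖gradient f p.1‖ + √2 * ‖p.2‖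

lemma prp_sub_le (f : Euc d → ℝ) {δ : ℝ} (h0 : 0 < δ) (h1 : δ ≤ 1) (p : Euc d × Euc d) :
    ‖prp f δ p.1 p.2 - p.1‖ ≤ √δ * aa f p := by
  have e : prp f δ p.1 p.2 - p.1 = √(2 * δ) • p.2 - δ • gradient f p.1 := by
    unfold prp; abel
  rw [e]
  refine (norm_sub_le _ _).trans ?_
  rw [norm_smul, norm_smul, Real.norm_of_nonneg h0.le, Real.norm_of_nonneg (Real.sqrt_nonneg _),
    Real.sqrt_mul (by norm_num)]
  unfold aa
  have hs0 := Real.sqrt_nonneg δ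
  have hs1 : √δ ≤ 1 := Real.sqrt_le_one.mpr h1
  have hss : √δ * √δ = δ := Real.mul_self_sqrt h0.le
  have : δ ≤ √δ := by nlinarith
  have := mul_le_mul_of_nonneg_right this (norm_nonneg (gradient f p.1))
  linarith

/-- normalized rejection error -/
def DD (f : Euc d → ℝ) (δ : ℝ) (p : Euc d × Euc d) : ℝ :=
  |R f δ p.1 (prp f δ p.1 p.2)| / δ * aa f p ^ 2

lemma aa_nonneg (f : Euc d → ℝ) (p : Euc d × Euc d) : 0 ≤ aa f p := by unfold aa; positivity

lemma DD_le (P : Pot f m L) {δ : ℝ} (h0 : 0 < δ) (h1 : δ ≤ 1) (p : Euc d × Euc d) :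
    DD f δ p ≤ (2 * L + L * (2 + L)) * aa f p ^ 4 := by
  have hL := P.L_pos
  have ha := aa_nonneg f p
  have h := P.R_bound h0 h1 p.1 (prp f δ p.1 p.2) 0 (c := L) (r := √δ * aa f p) (a := aa f p) hL.le
    (fun x _ => by simpa using P.lip x p.1) (prp_sub_le f h0 h1 p) (prp_sub_le f h0 h1 p)
    (by unfold aa; have := norm_nonneg p.2; have := Real.sqrt_nonneg 2; nlinarith)
  have hs1 : √δ ≤ 1 := Real.sqrt_le_one.mpr h1
  have h2 : |R f δ p.1 (prp f δ p.1 p.2)| / δ ≤ (2 * L + L * (2 + L)) * aa f p ^ 2 := by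
    rw [div_le_iff₀ h0, mul_comm _ δ]
    refine h.trans ?_
    have h5 : √δ * (L * (2 + L)) ≤ 1 * (L * (2 + L)) := by gcongr
    have h6 : 2 * L + √δ * (L * (2 + L)) ≤ 2 * L + L * (2 + L) := by linarith
    exact mul_le_mul_of_nonneg_left (mul_le_mul_of_nonneg_right h6 (sq_nonneg _)) h0.le
  unfold DD
  calc _ ≤ (2 * L + L * (2 + L)) * aa f p ^ 2 * aa f p ^ 2 := by gcongr
    _ = _ := by ring

lemma DD_nonneg (f : Euc d → ℝ) {δ : ℝ} (h0 : 0 < δ) (p : Euc d × Euc d) : 0 ≤ DD f δ p := by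
  unfold DD; positivity

lemma DD_tendsto (P : Pot f m L) {δ : ℕ → ℝ} (h0 : ∀ n, 0 < δ n) (h1 : ∀ n, δ n ≤ 1)
    (hδ : Filter.Tendsto δ Filter.atTop (nhds 0)) (p : Euc d × Euc d) :
    Filter.Tendsto (fun n => DD f (δ n) p) Filter.atTop (nhds 0) := by
  have hL := P.L_pos
  have ha := aa_nonneg f p
  set a := aa f p with hadef
  have hsq : Filter.Tendsto (fun n => √(δ n)) Filter.atTop (nhds 0) := by
    simpa using hδ.sqrt
  rw [Metric.tendsto_atTop]
  intro e he
  set c := e / (4 * (a ^ 4 + 1)) with hc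
  have hc0 : 0 < c := by positivity
  have hfd := (hasFDerivAt_gradient P.hf p.1).isLittleO.bound hc0
  obtain ⟨r, hr0, hr⟩ := Metric.eventually_nhds_iff_ball.mp hfd
  have e1 : ∀ᶠ n in Filter.atTop, √(δ n) * a < r := by
    have : Filter.Tendsto (fun n => √(δ n) * a) Filter.atTop (nhds 0) := by
      simpa using hsq.mul_const a
    exact this.eventually_lt_const hr0
  have e2 : ∀ᶠ n in Filter.atTop, √(δ n) * (L * (2 + L) * a ^ 4) < e / 4 := by
    have : Filter.Tendsto (fun n => √(δ n) * (L * (2 + L) * a ^ 4)) Filter.atTop (nhds 0) := by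
      simpa using hsq.mul_const (L * (2 + L) * a ^ 4)
    exact this.eventually_lt_const (by positivity)
  obtain ⟨N, hN⟩ := Filter.eventually_atTop.mp (e1.and e2)
  refine ⟨N, fun n hn => ?_⟩
  obtain ⟨g1, g2⟩ := hN n hn
  have h := P.R_bound (h0 n) (h1 n) p.1 (prp f (δ n) p.1 p.2) (fderiv ℝ (gradient f) p.1)
    (c := c) (r := √(δ n) * a) (a := a) hc0.le
    (fun x hx => hr x (by rw [Metric.mem_ball, dist_eq_norm]; exact hx.trans_lt g1))
    (prp_sub_le f (h0 n) (h1 n) p) (prp_sub_le f (h0 n) (h1 n) p)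
    (by rw [hadef]; unfold aa; have := norm_nonneg p.2; have := Real.sqrt_nonneg 2; nlinarith)
  rw [Real.dist_eq, sub_zero, abs_of_nonneg (DD_nonneg f (h0 n) p)]
  have h2 : |R f (δ n) p.1 (prp f (δ n) p.1 p.2)| / δ n ≤ (2 * c + √(δ n) * (L * (2 + L))) * a ^ 2 := by
    rw [div_le_iff₀ (h0 n), mul_comm _ (δ n)]
    exact h
  have h3 : DD f (δ n) p ≤ (2 * c + √(δ n) * (L * (2 + L))) * a ^ 2 * a ^ 2 := by
    unfold DD
    gcongr
  have h4 : c * a ^ 4 ≤ e / 4 := by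
    rw [hc, div_mul_eq_mul_div, div_le_div_iff₀ (by positivity) (by norm_num)]
    have : 0 ≤ a ^ 4 := by positivity
    nlinarith
  calc _ ≤ _ := h3
    _ = 2 * (c * a ^ 4) + √(δ n) * (L * (2 + L) * a ^ 4) := by ring
    _ < _ := by linarith

lemma aa_integrable (P : Pot f m L) (hμ : IsGibbs f μ) :
    Integrable (fun p => aa f p ^ 4) (μ.prod (_root_.stdGaussian d)) := by
  have hp := hμ.1
  have hL := P.L_pos
  have hg := P.gcont
  have h1 : Integrable (fun p : Euc d × Euc d => ‖p.1‖ ^ 4) (μ.prod (_root_.stdGaussian d)) :=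
    (P.mu_fourth hμ).comp_fst _
  have h2 : Integrable (fun p : Euc d × Euc d => ‖p.2‖ ^ 4) (μ.prod (_root_.stdGaussian d)) :=
    ((stdG_memLp d (p := 4) (by norm_num)).integrable_norm_pow (by norm_num)).comp_snd _
  refine ((h1.const_mul (8 * L ^ 4)).add (h2.const_mul (8 * 4))).mono' ?_ (ae_of_all _ fun p => ?_)
  · unfold aa
    exact Continuous.aestronglyMeasurable (by fun_prop)
  · rw [Real.norm_of_nonneg (pow_nonneg (aa_nonneg f p) 4)]
    simp only [Pi.add_apply]
    have hle : aa f p ≤ L * ‖p.1‖ + √2 * ‖p.2‖ := by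
      unfold aa; gcongr; exact P.grad_le _
    have h4 : (√2) ^ 4 = 4 := by
      have : (√2) ^ 2 = 2 := Real.sq_sqrt (by norm_num)
      calc (√2) ^ 4 = ((√2) ^ 2) ^ 2 := by ring
        _ = 4 := by rw [this]; norm_num
    have h8 := add_pow_le (a := L * ‖p.1‖) (b := √2 * ‖p.2‖) (by positivity) (by positivity) 4
    calc aa f p ^ 4 ≤ (L * ‖p.1‖ + √2 * ‖p.2‖) ^ 4 := by
          have := aa_nonneg f p
          gcongr
      _ ≤ _ := h8
      _ = _ := by rw [mul_pow, mul_pow, h4]; ring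

/-- rejection error -/
def err (f : Euc d → ℝ) (δ : ℝ) (p : Euc d × (Euc d × ℝ)) : Euc d :=
  mala f δ p - prp f δ p.1 p.2.1

lemma err_meas (P : Pot f m L) (δ : ℝ) : Measurable (err f δ) := by
  have h1 : Continuous (fun p : Euc d × (Euc d × ℝ) => prp f δ p.1 p.2.1) :=
    (prp_cont P.hf δ).comp (continuous_fst.prodMk (continuous_fst.comp continuous_snd))
  exact (mala_meas P.hf δ).sub h1.measurable

lemma DD_cont (P : Pot f m L) (δ : ℝ) : Continuous (DD f δ) := by
  have h1 := prp_cont P.hf δ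
  have h2 := P.gcont
  have h3 := P.hf.continuous
  unfold DD R aa
  fun_prop

lemma err_lintegral (P : Pot f m L) (hμ : IsGibbs f μ) {δ : ℝ} (h0 : 0 < δ) (h1 : δ ≤ 1) :
    ∫⁻ p, ‖err f δ p‖ₑ ^ 2 ∂(μ.prod (nuW d)) ≤
      ENNReal.ofReal (δ ^ 2 * ∫ p, DD f δ p ∂(μ.prod (_root_.stdGaussian d))) := by
  have hp := hμ.1
  have hem := P.err_meas δ
  have hacc := (acc_cont P.hf δ).measurable
  have hprp := (prp_cont P.hf δ).measurable
  have hDi : Integrable (DD f δ) (μ.prod (_root_.stdGaussian d)) := by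
    refine ((P.aa_integrable hμ).const_mul (2 * L + L * (2 + L))).mono'
      (P.DD_cont δ).aestronglyMeasurable (ae_of_all _ fun p => ?_)
    rw [Real.norm_of_nonneg (DD_nonneg f h0 p)]
    exact P.DD_le h0 h1 p
  rw [← integral_const_mul, ofReal_integral_eq_lintegral_ofReal (hDi.const_mul _)
    (ae_of_all _ fun p => mul_nonneg (sq_nonneg _) (DD_nonneg f h0 p)),
    lintegral_prod _ (by fun_prop), lintegral_prod]
  swap
  · have := (P.DD_cont δ).measurable
    fun_prop
  refine lintegral_mono fun z => ?_
  rw [nuW, lintegral_prod]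
  swap
  · exact (((hem.comp measurable_prodMk_left).enorm).pow_const 2).aemeasurable
  refine lintegral_mono fun η => ?_
  have e : ∀ u : ℝ, ‖err f δ (z, (η, u))‖ₑ ^ 2 = if u ≤ acc f δ z (prp f δ z η) then 0
      else ‖z - prp f δ z η‖ₑ ^ 2 := by
    intro u
    simp only [err, mala]
    split_ifs <;> simp
  simp only [e]
  rw [lintegral_unif_ite _ (acc_nonneg _ _ _ _) (acc_le_one _ _ _ _), mul_zero, zero_add]
  have e2 : ‖z - prp f δ z η‖ₑ ^ 2 = ENNReal.ofReal (‖z - prp f δ z η‖ ^ 2) := by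
    rw [← ofReal_norm, ENNReal.ofReal_pow (norm_nonneg _)]
  rw [e2, ← ENNReal.ofReal_mul (by linarith [acc_le_one f δ z (prp f δ z η)])]
  apply ENNReal.ofReal_le_ofReal
  have a1 := acc_defect f h0 z (prp f δ z η)
  have a2 := prp_sub_le f h0 h1 (z, η)
  simp only at a2
  rw [norm_sub_rev]
  have a3 : ‖prp f δ z η - z‖ ^ 2 ≤ δ * aa f (z, η) ^ 2 := by
    calc _ ≤ (√δ * aa f (z, η)) ^ 2 := by gcongr
      _ = _ := by rw [mul_pow, Real.sq_sqrt h0.le]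
  calc _ ≤ |R f δ z (prp f δ z η)| * (δ * aa f (z, η) ^ 2) := by gcongr
    _ = _ := by unfold DD; field_simp

/-- the rejection error is o(δ) -/
lemma err_small (P : Pot f m L) (hμ : IsGibbs f μ) {δ : ℕ → ℝ} (h0 : ∀ n, 0 < δ n) (h1 : ∀ n, δ n ≤ 1)
    (hδ : Filter.Tendsto δ Filter.atTop (nhds 0)) {τ : ℝ} (hτ : 0 < τ) :
    ∀ᶠ n in Filter.atTop, MemLp (err f (δ n)) 2 (μ.prod (nuW d)) ∧
      N2 (err f (δ n)) (μ.prod (nuW d)) ≤ τ * δ n := by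
  have ht : Filter.Tendsto (fun n => ∫ p, DD f (δ n) p ∂(μ.prod (_root_.stdGaussian d)))
      Filter.atTop (nhds (∫ p, (0:ℝ) ∂(μ.prod (_root_.stdGaussian d)))) := by
    refine tendsto_integral_of_dominated_convergence (fun p => (2 * L + L * (2 + L)) * aa f p ^ 4)
      (fun n => (P.DD_cont _).aestronglyMeasurable) ((P.aa_integrable hμ).const_mul _)
      (fun n => ae_of_all _ fun p => ?_) (ae_of_all _ fun p => P.DD_tendsto h0 h1 hδ p)
    rw [Real.norm_of_nonneg (DD_nonneg f (h0 n) p)]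
    exact P.DD_le (h0 n) (h1 n) p
  rw [integral_zero] at ht
  filter_upwards [ht.eventually_le_const (show (0:ℝ) < τ ^ 2 by positivity)] with n hn
  have hτδ : 0 ≤ τ * δ n := mul_nonneg hτ.le (h0 n).le
  have hle : eLpNorm (err f (δ n)) 2 (μ.prod (nuW d)) ≤ ENNReal.ofReal (τ * δ n) := by
    refine eLp2_le hτδ ((P.err_lintegral hμ (h0 n) (h1 n)).trans (ENNReal.ofReal_le_ofReal ?_))
    have := mul_le_mul_of_nonneg_left hn (sq_nonneg (δ n))
    linarith [mul_pow τ (δ n) 2]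
  refine ⟨⟨(P.err_meas _).aestronglyMeasurable, hle.trans_lt ENNReal.ofReal_lt_top⟩, ?_⟩
  exact ENNReal.toReal_le_of_le_ofReal hτδ hle

end Pot
end

section

lemma integral_norm_le_N2 {X : Type*} [MeasurableSpace X] {d : ℕ} {F : X → Euc d} {Q : Measure X}
    [IsProbabilityMeasure Q] (hF : MemLp F 2 Q) : ∫ x, ‖F x‖ ∂Q ≤ N2 F Q := by
  have hvar := ProbabilityTheory.variance_nonneg (fun x => ‖F x‖) Q
  rw [variance_eq_sub hF.norm] at hvar
  simp only [Pi.pow_apply] at hvar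
  rw [← N2_sq hF] at hvar
  exact (sq_le_sq₀ (integral_nonneg fun x => norm_nonneg _) N2_nonneg).mp (by linarith)

lemma nuW_mp (d : ℕ) : MeasurePreserving (Prod.fst : Euc d × ℝ → Euc d) (nuW d) (_root_.stdGaussian d) :=
  ⟨measurable_fst, by simp [nuW]⟩

lemma nuW_memLp (d : ℕ) : MemLp (fun w : Euc d × ℝ => w.1) 2 (nuW d) :=
  (stdG_memLp d (p := 2) (by norm_num)).comp_measurePreserving (nuW_mp d)

lemma nuW_integral {d : ℕ} {E : Type*} [NormedAddCommGroup E] [NormedSpace ℝ E] (F : Euc d → E) :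
    ∫ w, F w.1 ∂(nuW d) = ∫ x, F x ∂(_root_.stdGaussian d) := by
  rw [nuW, integral_fun_fst]; simp

lemma N2_mp {X Y : Type*} [MeasurableSpace X] [MeasurableSpace Y] {d : ℕ} {F : X → Euc d}
    {Q : Measure X} {R : Measure Y} {T : Y → X} (hT : MeasurePreserving T R Q)
    (hF : AEStronglyMeasurable F Q) : N2 (fun y => F (T y)) R = N2 F Q := by
  rw [← N2_map hT.measurable (by rwa [hT.map_eq]), hT.map_eq]

lemma mp_snd {X : Type*} [MeasurableSpace X] (Q : Measure X) [IsProbabilityMeasure Q] (d : ℕ) :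
    MeasurePreserving (Prod.snd : X × (Euc d × ℝ) → _) (Q.prod (nuW d)) (nuW d) :=
  ⟨measurable_snd, by simp⟩

lemma N2_noise {X : Type*} [MeasurableSpace X] (Q : Measure X) [IsProbabilityMeasure Q] (d : ℕ) :
    N2 (fun p : X × (Euc d × ℝ) => p.2.1) (Q.prod (nuW d)) ^ 2 = d := by
  have hT : MeasurePreserving (fun p : X × (Euc d × ℝ) => p.2.1) (Q.prod (nuW d)) (_root_.stdGaussian d) :=
    (nuW_mp d).comp (mp_snd Q d)
  have h1 := N2_mp hT (F := fun x => x) (by fun_prop)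
  rw [h1, N2_sq (stdG_memLp d (p := 2) (by norm_num)), stdG_integral_sq]

lemma noise_memLp {X : Type*} [MeasurableSpace X] (Q : Measure X) [IsProbabilityMeasure Q] (d : ℕ) :
    MemLp (fun p : X × (Euc d × ℝ) => p.2.1) 2 (Q.prod (nuW d)) :=
  (nuW_memLp d).comp_measurePreserving (mp_snd Q d)

/-- noise is orthogonal to the past -/
lemma noise_orth {X : Type*} [MeasurableSpace X] {Q : Measure X} [IsProbabilityMeasure Q] {d : ℕ}
    {F : X → Euc d} (hF : MemLp F 2 Q) :
    ∫ p : X × (Euc d × ℝ), inner ℝ (F p.1) p.2.1 ∂(Q.prod (nuW d)) = 0 := by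
  rw [integral_prod _ (integrable_inner2 (memLp_fst hF) (noise_memLp Q d))]
  simp only
  have : ∀ x, ∫ w : Euc d × ℝ, inner ℝ (F x) w.1 ∂(nuW d) = 0 := by
    intro x
    rw [nuW_integral (fun w => inner ℝ (F x) w), stdG_integral_inner]
  simp [this]

lemma N2_add_noise {X : Type*} [MeasurableSpace X] {Q : Measure X} [IsProbabilityMeasure Q] {d : ℕ}
    {F : X → Euc d} (hF : MemLp F 2 Q) {δ : ℝ} (hδ : 0 ≤ δ) :
    N2 (fun p : X × (Euc d × ℝ) => F p.1 + √(2 * δ) • p.2.1) (Q.prod (nuW d)) ^ 2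
      = N2 F Q ^ 2 + 2 * δ * d := by
  have hn : MemLp (fun p : X × (Euc d × ℝ) => (-√(2 * δ)) • p.2.1) 2 (Q.prod (nuW d)) :=
    (noise_memLp Q d).const_smul (-√(2 * δ))
  have h := N2_sub_sq (memLp_fst (R := nuW d) hF) hn
  have e : ∀ p : X × (Euc d × ℝ), F p.1 - (-√(2 * δ)) • p.2.1 = F p.1 + √(2 * δ) • p.2.1 := by
    intro p; rw [neg_smul, sub_neg_eq_add]
  simp only [e, inner_smul_right] at h
  rw [h, integral_const_mul, noise_orth hF, N2_smul, N2_fst hF.1, mul_pow, N2_noise, sq_abs, neg_sq,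
    Real.sq_sqrt (by linarith)]
  ring

namespace Pot
variable {d : ℕ} {f : Euc d → ℝ} {m L : ℝ} {μ : Measure (Euc d)}

lemma g_memLp (P : Pot f m L) {X : Type*} [MeasurableSpace X] {Q : Measure X} {F : X → Euc d}
    (hF : MemLp F 2 Q) : MemLp (fun x => gradient f (F x)) 2 Q :=
  hF.of_le_mul (c := L) (P.gcont.comp_aestronglyMeasurable hF.1) (ae_of_all _ fun _ => P.grad_le _)

lemma step_memLp (P : Pot f m L) {X : Type*} [MeasurableSpace X] {Q : Measure X} {F : X → Euc d}
    (hF : MemLp F 2 Q) (δ : ℝ) : MemLp (fun x => F x - δ • gradient f (F x)) 2 Q :=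
  hF.sub ((P.g_memLp hF).const_smul δ)

lemma prp_memLp (P : Pot f m L) {X : Type*} [MeasurableSpace X] {Q : Measure X} [IsProbabilityMeasure Q]
    {F : X → Euc d} (hF : MemLp F 2 Q) (δ : ℝ) :
    MemLp (fun p : X × (Euc d × ℝ) => prp f δ (F p.1) p.2.1) 2 (Q.prod (nuW d)) :=
  (memLp_fst (P.step_memLp hF δ)).add ((noise_memLp Q d).const_smul √(2 * δ))

lemma moment_step (P : Pot f m L) (hμ : IsGibbs f μ) {δ : ℝ} (h0 : 0 < δ) (hL : δ * L ≤ 1)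
    (hE : MemLp (err f δ) 2 (μ.prod (nuW d))) :
    N2 (fun x => x) μ ≤ √((1 - m * δ) ^ 2 * N2 (fun x => x) μ ^ 2 + 2 * δ * d)
      + N2 (err f δ) (μ.prod (nuW d)) := by
  have hp := hμ.1
  have hm2 := P.mu_memLp hμ
  have hmp : MeasurePreserving (mala f δ) (μ.prod (nuW d)) μ := ⟨mala_meas P.hf δ, mala_inv P.hf h0 hμ⟩
  have e1 := N2_mp hmp hm2.1
  rw [← e1]
  have e2 : mala f δ = fun p => prp f δ p.1 p.2.1 + err f δ p := by
    funext p; unfold err; abel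
  have hpm := P.prp_memLp hm2 δ
  have h3 : N2 (fun p : Euc d × (Euc d × ℝ) => mala f δ p) (μ.prod (nuW d)) ≤
      N2 (fun p : Euc d × (Euc d × ℝ) => prp f δ p.1 p.2.1) (μ.prod (nuW d)) + N2 (err f δ) (μ.prod (nuW d)) := by
    calc _ = N2 (fun p : Euc d × (Euc d × ℝ) => prp f δ p.1 p.2.1 + err f δ p) (μ.prod (nuW d)) := by
          rw [← e2]
      _ ≤ _ := N2_add_le hpm hE
  refine h3.trans (add_le_add ?_ le_rfl)
  apply Real.le_sqrt_of_sq_le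
  unfold prp
  rw [N2_add_noise (F := fun z => z - δ • gradient f z) (P.step_memLp hm2 δ) h0.le, e1]
  have hmd : 0 ≤ 1 - m * δ := by
    have := mul_le_mul_of_nonneg_right P.hmL h0.le
    linarith
  have h4 : N2 (fun z => z - δ • gradient f z) μ ≤ (1 - m * δ) * N2 (fun z => z) μ :=
    N2_le_mul hm2 hmd fun z => P.contract h0.le hL z
  have h5 : N2 (fun z => z - δ • gradient f z) μ ^ 2 ≤ ((1 - m * δ) * N2 (fun z => z) μ) ^ 2 :=
    pow_le_pow_left₀ N2_nonneg h4 2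
  linarith [mul_pow (1 - m * δ) (N2 (fun z => z) μ) 2]

lemma moment (P : Pot f m L) (hμ : IsGibbs f μ) : m * N2 (fun x => x) μ ^ 2 ≤ d := by
  by_contra! hcon
  have hL := P.L_pos
  have hm := P.hm
  set s := N2 (fun x => x) μ with hs
  have hs0 : 0 ≤ s := N2_nonneg
  set D := m * s ^ 2 - d with hD
  have hD0 : 0 < D := by linarith
  set δ : ℕ → ℝ := fun n => 1 / (L + 1) * (1 / ((n:ℝ) + 1)) with hδ
  have hδ0 : ∀ n, 0 < δ n := fun n => by simp only [hδ]; positivity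
  have hδle : ∀ n, δ n ≤ 1 / (L + 1) := fun n => by
    simp only [hδ]
    refine mul_le_of_le_one_right (by positivity) ?_
    rw [div_le_one (by positivity)]
    linarith [(Nat.cast_nonneg n : (0:ℝ) ≤ n)]
  have hδ1 : ∀ n, δ n ≤ 1 := fun n => (hδle n).trans (by rw [div_le_one (by linarith)]; linarith)
  have hδL : ∀ n, δ n * L ≤ 1 := fun n => by
    calc δ n * L ≤ 1 / (L + 1) * L := by gcongr; exact hδle n
      _ ≤ 1 := by rw [div_mul_eq_mul_div, one_mul, div_le_one (by linarith)]; linarith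
  have hδt : Filter.Tendsto δ Filter.atTop (nhds 0) := by
    have := (tendsto_one_div_add_atTop_nhds_zero_nat (𝕜 := ℝ)).const_mul (1 / (L + 1))
    rwa [mul_zero] at this
  set τ := D / (2 * (s + 1)) with hτ
  have hτ0 : 0 < τ := by positivity
  have hτs : 2 * s * τ ≤ D := by
    rw [hτ, mul_div_assoc', div_le_iff₀ (by positivity)]
    nlinarith
  have ht2 : ∀ᶠ n in Filter.atTop, m ^ 2 * s ^ 2 * δ n < D := by
    have : Filter.Tendsto (fun n => m ^ 2 * s ^ 2 * δ n) Filter.atTop (nhds 0) := by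
      simpa using hδt.const_mul (m ^ 2 * s ^ 2)
    exact this.eventually_lt_const hD0
  obtain ⟨n, ⟨hE, hEle⟩, hn⟩ := ((P.err_small hμ hδ0 hδ1 hδt hτ0).and ht2).exists
  have hstep := P.moment_step hμ (hδ0 n) (hδL n) hE
  rw [← hs] at hstep
  set T := √((1 - m * δ n) ^ 2 * s ^ 2 + 2 * δ n * d) with hT
  have hT0 : 0 ≤ T := Real.sqrt_nonneg _
  have hT2 : T ^ 2 = (1 - m * δ n) ^ 2 * s ^ 2 + 2 * δ n * d := Real.sq_sqrt (by
    have := (hδ0 n).le; positivity)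
  have h1 : s ≤ T + τ * δ n := by linarith
  have h2 : s ^ 2 - 2 * s * (τ * δ n) ≤ T ^ 2 := by
    rcases le_total s (τ * δ n) with h | h
    · nlinarith
    · have h5 : (s - τ * δ n) ^ 2 ≤ T ^ 2 := pow_le_pow_left₀ (by linarith) (by linarith) 2
      nlinarith [sq_nonneg (τ * δ n)]
  rw [hT2] at h2
  have h3 : δ n * (2 * m * s ^ 2) ≤ δ n * (m ^ 2 * s ^ 2 * δ n + 2 * d + 2 * s * τ) := by nlinarith
  have h4 := le_of_mul_le_mul_left h3 (hδ0 n)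
  linarith

set_option maxHeartbeats 1000000 in
/-- drift of the gradient along one MALA step -/
lemma drift (P : Pot f m L) (hμ : IsGibbs f μ) {G : ℝ} (hG : 0 < G)
    (hlapl : ∀ x : Euc d, ‖gradient (lapl f) x‖ ≤ G * (1 + ‖x‖))
    {δ : ℝ} (h0 : 0 < δ) (hL : δ * L ≤ 1)
    (hE : MemLp (err f δ) 2 (μ.prod (nuW d))) {X : Type*} [MeasurableSpace X] {Q : Measure X}
    [IsProbabilityMeasure Q] {Z φ : X → Euc d} (hZ : MeasurePreserving Z Q μ) (hφ : MemLp φ 2 Q) :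
    |∫ p : X × (Euc d × ℝ), inner ℝ (φ p.1) (gradient f (mala f δ (Z p.1, p.2)) - gradient f (Z p.1))
      ∂(Q.prod (nuW d))| ≤ N2 φ Q * (L * N2 (err f δ) (μ.prod (nuW d))
        + 2 * δ * G * (1 + N2 (fun x => x) μ + √(2 * δ) * √d) + L * (δ * N2 (gradient f) μ)) := by
  have hp := hμ.1
  have hL0 := P.L_pos
  have hm2 := P.mu_memLp hμ
  have hZm : MemLp Z 2 Q := hm2.comp_measurePreserving hZ
  have hgZ := P.g_memLp hZm
  have hΦ := memLp_fst (R := nuW d) hφ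
  have hTp : MeasurePreserving (fun p : X × (Euc d × ℝ) => (Z p.1, p.2)) (Q.prod (nuW d)) (μ.prod (nuW d)) :=
    hZ.prod (MeasurePreserving.id _)
  have hEm : MemLp (fun p : X × (Euc d × ℝ) => err f δ (Z p.1, p.2)) 2 (Q.prod (nuW d)) :=
    hE.comp_measurePreserving hTp
  have hpm := P.prp_memLp hZm δ
  have hmal : MemLp (fun p : X × (Euc d × ℝ) => mala f δ (Z p.1, p.2)) 2 (Q.prod (nuW d)) := by
    have : (fun p : X × (Euc d × ℝ) => mala f δ (Z p.1, p.2)) =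
        fun p => prp f δ (Z p.1) p.2.1 + err f δ (Z p.1, p.2) := by
      funext p; unfold err; abel
    rw [this]; exact hpm.add hEm
  have hst := P.step_memLp hZm δ
  set F1 := fun p : X × (Euc d × ℝ) => gradient f (mala f δ (Z p.1, p.2)) - gradient f (prp f δ (Z p.1) p.2.1) with hF1
  set F2 := fun p : X × (Euc d × ℝ) => gradient f (prp f δ (Z p.1) p.2.1) - gradient f (Z p.1 - δ • gradient f (Z p.1)) with hF2
  set F3 := fun p : X × (Euc d × ℝ) => gradient f (Z p.1 - δ • gradient f (Z p.1)) - gradient f (Z p.1) with hF3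
  have m1 : MemLp F1 2 (Q.prod (nuW d)) := (P.g_memLp hmal).sub (P.g_memLp hpm)
  have m2 : MemLp F2 2 (Q.prod (nuW d)) := (P.g_memLp hpm).sub (memLp_fst (P.g_memLp hst))
  have m3 : MemLp F3 2 (Q.prod (nuW d)) := (memLp_fst (P.g_memLp hst)).sub (memLp_fst hgZ)
  have e : ∀ p : X × (Euc d × ℝ), inner ℝ (φ p.1) (gradient f (mala f δ (Z p.1, p.2)) - gradient f (Z p.1))
      = inner ℝ (φ p.1) (F1 p) + inner ℝ (φ p.1) (F2 p) + inner ℝ (φ p.1) (F3 p) := by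
    intro p
    rw [← inner_add_right, ← inner_add_right]
    congr 1
    simp only [hF1, hF2, hF3]; abel
  simp only [e]
  have i1 := integrable_inner2 hΦ m1
  have i2 := integrable_inner2 hΦ m2
  have i3 := integrable_inner2 hΦ m3
  have i12 : Integrable (fun p : X × (Euc d × ℝ) => inner ℝ (φ p.1) (F1 p) + inner ℝ (φ p.1) (F2 p))
      (Q.prod (nuW d)) := i1.add i2
  rw [integral_add i12 i3, integral_add i1 i2]
  have b1 : |∫ p : X × (Euc d × ℝ), inner ℝ (φ p.1) (F1 p) ∂(Q.prod (nuW d))| ≤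
      N2 φ Q * (L * N2 (err f δ) (μ.prod (nuW d))) := by
    refine (cs_inner hΦ m1).trans ?_
    rw [N2_fst hφ.1]
    refine mul_le_mul_of_nonneg_left ?_ N2_nonneg
    rw [← N2_mp hTp hE.1]
    exact N2_le_mul hEm hL0.le fun p => P.lip _ _
  have b3 : |∫ p : X × (Euc d × ℝ), inner ℝ (φ p.1) (F3 p) ∂(Q.prod (nuW d))| ≤
      N2 φ Q * (L * (δ * N2 (gradient f) μ)) := by
    refine (cs_inner hΦ m3).trans ?_
    rw [N2_fst hφ.1]
    refine mul_le_mul_of_nonneg_left ?_ N2_nonneg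
    rw [← N2_mp hZ P.gcont.aestronglyMeasurable, ← N2_fst (R := nuW d) hgZ.1, ← mul_assoc]
    refine N2_le_mul (memLp_fst hgZ) (by positivity) fun p => (P.lip _ _).trans (le_of_eq ?_)
    rw [sub_sub_cancel_left, norm_neg, norm_smul, Real.norm_of_nonneg h0.le]; ring
  have b2 : |∫ p : X × (Euc d × ℝ), inner ℝ (φ p.1) (F2 p) ∂(Q.prod (nuW d))| ≤
      N2 φ Q * (2 * δ * G * (1 + N2 (fun x => x) μ + √(2 * δ) * √d)) := by
    rw [integral_prod _ i2]
    have hb : ∀ x, |∫ w, inner ℝ (φ x) (F2 (x, w)) ∂(nuW d)| ≤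
        2 * δ * G * ((1 + √(2 * δ) * √d) * ‖φ x‖ + ‖φ x‖ * ‖Z x‖) := by
      intro x
      have hgi : Integrable (fun η => gradient f (prp f δ (Z x) η)) (_root_.stdGaussian d) :=
        gradient_integrable P.hm P.hmL P.hf P.hH P.hg0 _ _
      have hgi' : Integrable (fun η => gradient f (prp f δ (Z x) η) - gradient f (Z x - δ • gradient f (Z x)))
          (_root_.stdGaussian d) := hgi.sub (integrable_const _)
      have e1 : ∫ w, inner ℝ (φ x) (F2 (x, w)) ∂(nuW d) =
          inner ℝ (φ x) (∫ η, gradient f (prp f δ (Z x) η) ∂(_root_.stdGaussian d)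
            - gradient f (Z x - δ • gradient f (Z x))) := by
        simp only [hF2]
        rw [nuW_integral (fun η => inner ℝ (φ x) (gradient f (prp f δ (Z x) η) - gradient f (Z x - δ • gradient f (Z x)))),
          integral_inner (𝕜 := ℝ) hgi', integral_sub hgi (integrable_const _)]
        simp
      rw [e1]
      refine (abs_real_inner_le_norm _ _).trans ?_
      have h1 := heat_grad P.hm P.hmL P.hf P.hH P.hg0 hG hlapl (Z x - δ • gradient f (Z x))
        (Real.sqrt_nonneg (2 * δ))
      rw [Real.sq_sqrt (by linarith)] at h1
      have h2 : ‖Z x - δ • gradient f (Z x)‖ ≤ ‖Z x‖ := by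
        refine (P.contract h0.le hL _).trans (mul_le_of_le_one_left (norm_nonneg _) ?_)
        have := mul_pos P.hm h0
        linarith
      calc _ ≤ ‖φ x‖ * (2 * δ * (G * (1 + ‖Z x - δ • gradient f (Z x)‖ + √(2 * δ) * √d))) := by
            gcongr; exact h1
        _ ≤ ‖φ x‖ * (2 * δ * (G * (1 + ‖Z x‖ + √(2 * δ) * √d))) := by gcongr
        _ = _ := by ring
    have hpi : Integrable (fun x => ‖φ x‖ * ‖Z x‖) Q := by
      refine ((int_sq2 hφ).add (int_sq2 hZm)).mono' (hφ.1.norm.mul hZm.1.norm) (ae_of_all _ fun x => ?_)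
      rw [Real.norm_of_nonneg (by positivity)]
      simp only [Pi.add_apply]
      nlinarith [sq_nonneg (‖φ x‖ - ‖Z x‖), sq_nonneg (‖φ x‖), sq_nonneg ‖Z x‖]
    have hni : Integrable (fun x => ‖φ x‖) Q := (hφ.integrable (by norm_num)).norm
    have hbi : Integrable (fun x => 2 * δ * G * ((1 + √(2 * δ) * √d) * ‖φ x‖ + ‖φ x‖ * ‖Z x‖)) Q :=
      ((hni.const_mul _).add hpi).const_mul _
    rw [← Real.norm_eq_abs]
    refine (norm_integral_le_of_norm_le hbi (ae_of_all _ hb)).trans ?_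
    rw [integral_const_mul, integral_add (hni.const_mul _) hpi, integral_const_mul]
    have c1 := integral_norm_le_N2 hφ
    have c2 := cs_mul hφ hZm
    rw [show N2 Z Q = N2 (fun x => x) μ from N2_mp (F := fun x => x) hZ hm2.1] at c2
    have k1 : 0 ≤ 1 + √(2 * δ) * √d := by positivity
    have k2 : 0 ≤ 2 * δ * G := by positivity
    have k3 := mul_le_mul_of_nonneg_left (add_le_add (mul_le_mul_of_nonneg_left c1 k1) c2) k2
    refine k3.trans (le_of_eq ?_)
    ring
  have t1 := abs_add_le (∫ p : X × (Euc d × ℝ), inner ℝ (φ p.1) (F1 p) ∂(Q.prod (nuW d)) + ∫ p : X × (Euc d × ℝ), inner ℝ (φ p.1) (F2 p) ∂(Q.prod (nuW d))) (∫ p : X × (Euc d × ℝ), inner ℝ (φ p.1) (F3 p) ∂(Q.prod (nuW d)))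
  have t2 := abs_add_le (∫ p : X × (Euc d × ℝ), inner ℝ (φ p.1) (F1 p) ∂(Q.prod (nuW d))) (∫ p : X × (Euc d × ℝ), inner ℝ (φ p.1) (F2 p) ∂(Q.prod (nuW d)))
  refine t1.trans ?_
  rw [mul_add, mul_add]
  linarith

end Pot
end

section

/-- Invariant of the inductive coupling between MALA and frozen-drift noise. -/
structure CInv {d : ℕ} (f : Euc d → ℝ) (μ : Measure (Euc d)) (γ0 : Measure (Euc d × Euc d))
    (δ A ε w θ B L : ℝ) {X : Type} [MeasurableSpace X] (Q : Measure X) (q : X → Euc d × Euc d)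
    (S z : X → Euc d) (j : ℕ) : Prop where
  prob : IsProbabilityMeasure Q
  marg : MeasurePreserving (fun x => (q x, S x)) Q (γ0.prod (isoGaussian d (2 * δ * j)))
  zlaw : MeasurePreserving z Q μ
  b4 : N2 (fun x => z x - (q x).2 - S x) Q ≤ j * (δ * A + ε)
  b5 : N2 (fun x => z x - (q x).2 + ((j : ℝ) * δ) • gradient f (q x).2 - S x) Q ≤ j * (δ * (L * w) + ε)
  b6 : ∀ φ : Euc d × Euc d → Euc d, MemLp φ 2 γ0 →
    |∫ x, inner ℝ (φ (q x)) (gradient f (z x) - gradient f (q x).2) ∂Q| ≤ N2 φ γ0 * (j * θ)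
  b7 : ∀ φ : Euc d × Euc d → Euc d, MemLp φ 2 γ0 →
    |∫ x, inner ℝ (φ (q x)) (z x - (q x).2 + ((j : ℝ) * δ) • gradient f (q x).2 - S x) ∂Q|
      ≤ N2 φ γ0 * (j * (δ * B + ε))

lemma isoG_memLp (d : ℕ) (a : ℝ) : MemLp (fun x : Euc d => x) 2 (isoGaussian d a) := by
  unfold isoGaussian
  rw [memLp_map (by fun_prop) (by fun_prop)]
  exact (stdG_memLp d (p := 2) (by norm_num)).const_smul (√a)

lemma isoG_N2 (d : ℕ) {a : ℝ} (ha : 0 ≤ a) : N2 (fun x : Euc d => x) (isoGaussian d a) = √(a * d) := by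
  have h : N2 (fun x : Euc d => x) (_root_.stdGaussian d) = √d := by
    rw [← stdG_integral_sq, ← N2_sq (stdG_memLp d (p := 2) (by norm_num)), Real.sqrt_sq N2_nonneg]
  unfold isoGaussian
  rw [N2_map (by fun_prop) (by fun_prop), N2_smul, h, abs_of_nonneg (Real.sqrt_nonneg _), Real.sqrt_mul ha]

namespace Pot
variable {d : ℕ} {f : Euc d → ℝ} {m L : ℝ} {μ : Measure (Euc d)}

lemma cinv_zero (P : Pot f m L) {γ0 : Measure (Euc d × Euc d)} [IsProbabilityMeasure γ0]
    (h2 : γ0.map Prod.snd = μ) (δ A ε w θ B : ℝ) :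
    CInv f μ γ0 δ A ε w θ B L γ0 id (fun _ => 0) Prod.snd 0 where
  prob := inferInstance
  marg := by
    refine ⟨by fun_prop, ?_⟩
    rw [Nat.cast_zero, mul_zero, isoG_zero, Measure.prod_dirac]
    rfl
  zlaw := ⟨measurable_snd, h2⟩
  b4 := by simp [N2]
  b5 := by simp [N2]
  b6 := fun φ hφ => by simp
  b7 := fun φ hφ => by simp

set_option maxHeartbeats 1000000 in
lemma cinv_succ (P : Pot f m L) (hμ : IsGibbs f μ) {γ0 : Measure (Euc d × Euc d)} [IsProbabilityMeasure γ0]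
    (h2 : γ0.map Prod.snd = μ) {G : ℝ} (hG : 0 < G)
    (hlapl : ∀ x : Euc d, ‖gradient (lapl f) x‖ ≤ G * (1 + ‖x‖))
    {δ w θ B : ℝ} {N : ℕ} (h0 : 0 < δ) (hL : δ * L ≤ 1)
    (hE : MemLp (err f δ) 2 (μ.prod (nuW d)))
    (hθ : L * N2 (err f δ) (μ.prod (nuW d))
        + 2 * δ * G * (1 + N2 (fun x => x) μ + √(2 * δ) * √d) + L * (δ * N2 (gradient f) μ) ≤ θ)
    (hB : N * θ ≤ B)
    (hw : √(2 * δ * N * d) + N * (δ * N2 (gradient f) μ + N2 (err f δ) (μ.prod (nuW d))) ≤ w)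
    {X : Type} [MeasurableSpace X] {Q : Measure X} {q : X → Euc d × Euc d}
    {S z : X → Euc d} {j : ℕ} (hj : j < N)
    (I : CInv f μ γ0 δ (N2 (gradient f) μ) (N2 (err f δ) (μ.prod (nuW d))) w θ B L Q q S z j) :
    CInv f μ γ0 δ (N2 (gradient f) μ) (N2 (err f δ) (μ.prod (nuW d))) w θ B L (Q.prod (nuW d))
      (fun p => q p.1) (fun p => S p.1 + √(2 * δ) • p.2.1) (fun p => mala f δ (z p.1, p.2)) (j + 1) := by
  have hp := hμ.1
  have hpQ := I.prob
  have hL0 := P.L_pos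
  have hj' : (j : ℝ) ≤ N := by exact_mod_cast hj.le
  have hj0 : (0:ℝ) ≤ j := Nat.cast_nonneg j
  set A := N2 (gradient f) μ with hA
  set ε := N2 (err f δ) (μ.prod (nuW d)) with hε
  have hA0 : 0 ≤ A := N2_nonneg
  have hε0 : 0 ≤ ε := N2_nonneg
  have hm2 := P.mu_memLp hμ
  have hgm : MemLp (gradient f) 2 μ := P.g_memLp hm2
  -- marginals
  have hq : MeasurePreserving q Q γ0 := by
    have : MeasurePreserving (Prod.fst : (Euc d × Euc d) × Euc d → _)
      (γ0.prod (isoGaussian d (2 * δ * j))) γ0 := measurePreserving_fst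
    exact this.comp I.marg
  have hS : MeasurePreserving S Q (isoGaussian d (2 * δ * j)) := by
    have : MeasurePreserving (Prod.snd : (Euc d × Euc d) × Euc d → _)
      (γ0.prod (isoGaussian d (2 * δ * j))) (isoGaussian d (2 * δ * j)) := measurePreserving_snd
    exact this.comp I.marg
  have hz0 : MeasurePreserving (fun x => (q x).2) Q μ :=
    (⟨measurable_snd, h2⟩ : MeasurePreserving Prod.snd γ0 μ).comp hq
  have mz : MemLp z 2 Q := hm2.comp_measurePreserving I.zlaw
  have mz0 : MemLp (fun x => (q x).2) 2 Q := hm2.comp_measurePreserving hz0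
  have mS : MemLp S 2 Q := (isoG_memLp d _).comp_measurePreserving hS
  have mgz := P.g_memLp mz
  have mgz0 := P.g_memLp mz0
  have hTp : MeasurePreserving (fun p : X × (Euc d × ℝ) => (z p.1, p.2)) (Q.prod (nuW d)) (μ.prod (nuW d)) :=
    I.zlaw.prod (MeasurePreserving.id _)
  have mE : MemLp (fun p : X × (Euc d × ℝ) => err f δ (z p.1, p.2)) 2 (Q.prod (nuW d)) :=
    hE.comp_measurePreserving hTp
  have nE : N2 (fun p : X × (Euc d × ℝ) => err f δ (z p.1, p.2)) (Q.prod (nuW d)) = ε :=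
    N2_mp (F := err f δ) hTp hE.1
  have hmal : ∀ p : X × (Euc d × ℝ), mala f δ (z p.1, p.2) =
      err f δ (z p.1, p.2) + (z p.1 - δ • gradient f (z p.1) + √(2 * δ) • p.2.1) := by
    intro p
    have : prp f δ (z p.1) p.2.1 = z p.1 - δ • gradient f (z p.1) + √(2 * δ) • p.2.1 := rfl
    rw [← this]; unfold err; abel
  have ngz : N2 (fun x => gradient f (z x)) Q = A := N2_mp (F := gradient f) I.zlaw hgm.1
  have m4 : MemLp (fun x => z x - (q x).2 - S x) 2 Q := (mz.sub mz0).sub mS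
  have m5 : MemLp (fun x => z x - (q x).2 + ((j : ℝ) * δ) • gradient f (q x).2 - S x) 2 Q :=
    ((mz.sub mz0).add (mgz0.const_smul ((j:ℝ) * δ))).sub mS
  have mD : MemLp (fun x => gradient f (z x) - gradient f (q x).2) 2 Q := mgz.sub mgz0
  have hDec : ∀ p : X × (Euc d × ℝ), mala f δ (z p.1, p.2) - (q p.1).2
        + (((j + 1 : ℕ) : ℝ) * δ) • gradient f (q p.1).2 - (S p.1 + √(2 * δ) • p.2.1)
      = (z p.1 - (q p.1).2 + ((j : ℝ) * δ) • gradient f (q p.1).2 - S p.1)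
        + err f δ (z p.1, p.2) - δ • (gradient f (z p.1) - gradient f (q p.1).2) := by
    intro p
    rw [hmal]
    push_cast
    rw [add_mul, one_mul, add_smul, smul_sub]
    abel
  refine ⟨inferInstance, ?_, ?_, ?_, ?_, ?_, ?_⟩
  · -- marginal of (q, S)
    have k1 := I.marg.prod (nuW_mp d)
    have k2 := measurePreserving_prodAssoc γ0 (isoGaussian d (2 * δ * j)) (_root_.stdGaussian d)
    have k3 : MeasurePreserving (fun p : Euc d × Euc d => p.1 + √(2 * δ) • p.2)
        ((isoGaussian d (2 * δ * j)).prod (_root_.stdGaussian d)) (isoGaussian d (2 * δ * ((j + 1 : ℕ) : ℝ))) := by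
      refine ⟨by fun_prop, ?_⟩
      rw [isoG_add d (by positivity) (by positivity)]
      congr 1; push_cast; ring
    exact ((MeasurePreserving.id γ0).prod k3).comp (k2.comp k1)
  · have hmp : MeasurePreserving (mala f δ) (μ.prod (nuW d)) μ := ⟨mala_meas P.hf δ, mala_inv P.hf h0 hμ⟩
    exact hmp.comp hTp
  · have e : ∀ p : X × (Euc d × ℝ), mala f δ (z p.1, p.2) - (q p.1).2 - (S p.1 + √(2 * δ) • p.2.1)
        = (z p.1 - (q p.1).2 - S p.1) + err f δ (z p.1, p.2) - δ • gradient f (z p.1) := by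
      intro p; rw [hmal]; abel
    simp only [e]
    have k := N2_sub_le ((memLp_fst (R := nuW d) m4).add mE) ((memLp_fst (R := nuW d) mgz).const_smul δ)
    have k' := N2_add_le (memLp_fst (R := nuW d) m4) mE
    have k3 : N2 (fun p : X × (Euc d × ℝ) => δ • gradient f (z p.1)) (Q.prod (nuW d)) = δ * A := by
      rw [N2_smul, N2_fst (F := fun x => gradient f (z x)) mgz.1, ngz, abs_of_pos h0]
    rw [N2_fst m4.1, nE] at k'
    refine k.trans ?_
    have k4 : N2 (δ • fun p : X × (Euc d × ℝ) => gradient f (z p.1)) (Q.prod (nuW d)) = δ * A := k3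
    rw [k4]
    have := I.b4
    push_cast
    have k5 : N2 ((fun p : X × (Euc d × ℝ) => z p.1 - (q p.1).2 - S p.1) + fun p => err f δ (z p.1, p.2))
      (Q.prod (nuW d)) ≤ N2 (fun x => z x - (q x).2 - S x) Q + ε := k'
    linarith
  · simp only [hDec]
    have k' := N2_add_le (memLp_fst (R := nuW d) m5) mE
    have mD' : MemLp (fun p : X × (Euc d × ℝ) => δ • (gradient f (z p.1) - gradient f (q p.1).2)) 2 (Q.prod (nuW d)) :=
      (memLp_fst (R := nuW d) mD).const_smul δ
    have msum : MemLp (fun p : X × (Euc d × ℝ) => (z p.1 - (q p.1).2 + ((j : ℝ) * δ) • gradient f (q p.1).2 - S p.1)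
        + err f δ (z p.1, p.2)) 2 (Q.prod (nuW d)) := (memLp_fst (R := nuW d) m5).add mE
    have k := N2_sub_le msum mD'
    rw [N2_fst m5.1, nE] at k'
    have k3 : N2 (fun p : X × (Euc d × ℝ) => δ • (gradient f (z p.1) - gradient f (q p.1).2)) (Q.prod (nuW d))
        ≤ δ * (L * w) := by
      rw [N2_smul, N2_fst (F := fun x => gradient f (z x) - gradient f (q x).2) mD.1, abs_of_pos h0]
      refine mul_le_mul_of_nonneg_left ?_ h0.le
      have t1 : N2 (fun x => gradient f (z x) - gradient f (q x).2) Q ≤ L * N2 (fun x => z x - (q x).2) Q :=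
        N2_le_mul (mz.sub mz0) hL0.le fun x => P.lip _ _
      refine t1.trans (mul_le_mul_of_nonneg_left ?_ hL0.le)
      have e : (fun x => z x - (q x).2) = fun x => (z x - (q x).2 - S x) + S x := by funext x; abel
      rw [e]
      refine (N2_add_le m4 mS).trans ?_
      have nS : N2 S Q = √(2 * δ * j * d) := by
        rw [← isoG_N2 d (by positivity)]
        exact N2_mp (F := fun x => x) hS (by fun_prop)
      rw [nS]
      refine le_trans ?_ hw
      have a1 : √(2 * δ * j * d) ≤ √(2 * δ * N * d) := by
        apply Real.sqrt_le_sqrt; gcongr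
      have a2 := I.b4
      have a3 : (j:ℝ) * (δ * A + ε) ≤ N * (δ * A + ε) := by gcongr
      linarith
    refine k.trans ?_
    have := I.b5
    push_cast
    linarith
  · intro φ hφ
    have mφ : MemLp (fun x => φ (q x)) 2 Q := hφ.comp_measurePreserving hq
    have nφ : N2 (fun x => φ (q x)) Q = N2 φ γ0 := N2_mp hq hφ.1
    have k1 := P.drift hμ hG hlapl h0 hL hE I.zlaw mφ
    rw [nφ] at k1
    have k1' := k1.trans (mul_le_mul_of_nonneg_left hθ N2_nonneg)
    have k2 := I.b6 φ hφ
    have mmal : MemLp (fun p : X × (Euc d × ℝ) => mala f δ (z p.1, p.2)) 2 (Q.prod (nuW d)) := by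
      have hmp : MeasurePreserving (mala f δ) (μ.prod (nuW d)) μ := ⟨mala_meas P.hf δ, mala_inv P.hf h0 hμ⟩
      exact hm2.comp_measurePreserving (hmp.comp hTp)
    have mF : MemLp (fun p : X × (Euc d × ℝ) => gradient f (mala f δ (z p.1, p.2)) - gradient f (z p.1)) 2 (Q.prod (nuW d)) :=
      (P.g_memLp mmal).sub (memLp_fst mgz)
    have mφ' := memLp_fst (R := nuW d) mφ
    have e : ∀ p : X × (Euc d × ℝ), inner ℝ (φ (q p.1)) (gradient f (mala f δ (z p.1, p.2)) - gradient f (q p.1).2)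
        = inner ℝ (φ (q p.1)) (gradient f (mala f δ (z p.1, p.2)) - gradient f (z p.1))
        + inner ℝ (φ (q p.1)) (gradient f (z p.1) - gradient f (q p.1).2) := by
      intro p; rw [← inner_add_right]; congr 1; abel
    simp only [e]
    rw [integral_add (integrable_inner2 mφ' mF) (integrable_inner2 mφ' (memLp_fst mD))]
    have e2 : ∫ p : X × (Euc d × ℝ), inner ℝ (φ (q p.1)) (gradient f (z p.1) - gradient f (q p.1).2) ∂(Q.prod (nuW d))
        = ∫ x, inner ℝ (φ (q x)) (gradient f (z x) - gradient f (q x).2) ∂Q := by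
      rw [integral_fun_fst (fun x => inner ℝ (φ (q x)) (gradient f (z x) - gradient f (q x).2))]; simp
    rw [e2]
    refine (abs_add_le _ _).trans ?_
    push_cast
    linarith
  · intro φ hφ
    have mφ : MemLp (fun x => φ (q x)) 2 Q := hφ.comp_measurePreserving hq
    have nφ : N2 (fun x => φ (q x)) Q = N2 φ γ0 := N2_mp hq hφ.1
    have mφ' := memLp_fst (R := nuW d) mφ
    have k1 := I.b7 φ hφ
    have k2 := I.b6 φ hφ
    have k3 := cs_inner mφ' mE
    rw [nE, N2_fst mφ.1, nφ] at k3
    have e : ∀ p : X × (Euc d × ℝ), inner ℝ (φ (q p.1)) ((z p.1 - (q p.1).2 + ((j : ℝ) * δ) • gradient f (q p.1).2 - S p.1)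
        + err f δ (z p.1, p.2) - δ • (gradient f (z p.1) - gradient f (q p.1).2)) 
        = (inner ℝ (φ (q p.1)) (z p.1 - (q p.1).2 + ((j : ℝ) * δ) • gradient f (q p.1).2 - S p.1)
        + inner ℝ (φ (q p.1)) (err f δ (z p.1, p.2))) - δ * inner ℝ (φ (q p.1)) (gradient f (z p.1) - gradient f (q p.1).2) := by
      intro p; rw [inner_sub_right, inner_add_right, inner_smul_right]
    have hθ0 : 0 ≤ θ := by
      refine le_trans ?_ hθ
      have : 0 ≤ N2 (fun x : Euc d => x) μ := N2_nonneg
      positivity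
    simp only [hDec, e]
    have i5 := integrable_inner2 mφ' (memLp_fst (R := nuW d) m5)
    have iE := integrable_inner2 mφ' mE
    have iD := integrable_inner2 mφ' (memLp_fst (R := nuW d) mD)
    rw [integral_sub ?_ (iD.const_mul δ), integral_add i5 iE, integral_const_mul]
    swap
    · exact i5.add iE
    have e2 : ∫ p : X × (Euc d × ℝ), inner ℝ (φ (q p.1)) (gradient f (z p.1) - gradient f (q p.1).2) ∂(Q.prod (nuW d))
        = ∫ x, inner ℝ (φ (q x)) (gradient f (z x) - gradient f (q x).2) ∂Q := by
      rw [integral_fun_fst (fun x => inner ℝ (φ (q x)) (gradient f (z x) - gradient f (q x).2))]; simp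
    have e3 : ∫ p : X × (Euc d × ℝ), inner ℝ (φ (q p.1)) (z p.1 - (q p.1).2 + ((j : ℝ) * δ) • gradient f (q p.1).2 - S p.1) ∂(Q.prod (nuW d))
        = ∫ x, inner ℝ (φ (q x)) (z x - (q x).2 + ((j : ℝ) * δ) • gradient f (q x).2 - S x) ∂Q := by
      rw [integral_fun_fst (fun x => inner ℝ (φ (q x)) (z x - (q x).2 + ((j : ℝ) * δ) • gradient f (q x).2 - S x))]; simp
    rw [e2, e3]
    refine (abs_sub _ _).trans ?_
    refine (add_le_add (abs_add_le _ _) le_rfl).trans ?_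
    rw [abs_mul, abs_of_pos h0]
    have hn : 0 ≤ N2 φ γ0 := N2_nonneg
    have k4 := mul_le_mul_of_nonneg_left k2 h0.le
    have k5 : N2 φ γ0 * (j * θ) ≤ N2 φ γ0 * B :=
      mul_le_mul_of_nonneg_left ((mul_le_mul_of_nonneg_right hj' hθ0).trans hB) hn
    have k6 := mul_le_mul_of_nonneg_left k5 h0.le
    push_cast
    calc _ ≤ N2 φ γ0 * (j * (δ * B + ε)) + N2 φ γ0 * ε + δ * (N2 φ γ0 * B) := by
          linarith
      _ = _ := by ring
end Pot
end

section

/-- One step of LMC, as a map of the position and the Gaussian increment. -/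
def lmcStep {d : ℕ} (f : Euc d → ℝ) (h : ℝ) (p : Euc d × Euc d) : Euc d :=
  p.1 - h • gradient f p.1 + √(2 * h) • p.2

namespace Pot
variable {d : ℕ} {f : Euc d → ℝ} {m L : ℝ} {μ : Measure (Euc d)}

lemma lmcStep_meas (P : Pot f m L) (h : ℝ) : Measurable (lmcStep f h) := by
  have := P.gcont.measurable
  unfold lmcStep
  fun_prop

lemma cinv_all (P : Pot f m L) (hμ : IsGibbs f μ) {γ0 : Measure (Euc d × Euc d)} [IsProbabilityMeasure γ0]
    (h2 : γ0.map Prod.snd = μ) {G : ℝ} (hG : 0 < G)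
    (hlapl : ∀ x : Euc d, ‖gradient (lapl f) x‖ ≤ G * (1 + ‖x‖))
    {δ w θ B : ℝ} {N : ℕ} (h0 : 0 < δ) (hL : δ * L ≤ 1)
    (hE : MemLp (err f δ) 2 (μ.prod (nuW d)))
    (hθ : L * N2 (err f δ) (μ.prod (nuW d))
        + 2 * δ * G * (1 + N2 (fun x => x) μ + √(2 * δ) * √d) + L * (δ * N2 (gradient f) μ) ≤ θ)
    (hB : N * θ ≤ B)
    (hw : √(2 * δ * N * d) + N * (δ * N2 (gradient f) μ + N2 (err f δ) (μ.prod (nuW d))) ≤ w)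
    (j : ℕ) (hj : j ≤ N) :
    ∃ (X : Type) (_ : MeasurableSpace X) (Q : Measure X) (q : X → Euc d × Euc d) (S z : X → Euc d),
      CInv f μ γ0 δ (N2 (gradient f) μ) (N2 (err f δ) (μ.prod (nuW d))) w θ B L Q q S z j := by
  induction j with
  | zero => exact ⟨_, _, γ0, id, _, Prod.snd, P.cinv_zero h2 δ _ _ w θ B⟩
  | succ j ih =>
    obtain ⟨X, _, Q, q, S, z, I⟩ := ih (by omega)
    exact ⟨_, _, _, _, _, _, P.cinv_succ hμ h2 hG hlapl h0 hL hE hθ hB hw (by omega) I⟩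

set_option maxHeartbeats 1000000 in
lemma big_step (P : Pot f m L) (hμ : IsGibbs f μ) {γ0 : Measure (Euc d × Euc d)} [IsProbabilityMeasure γ0]
    (h1 : MemLp (fun p : Euc d × Euc d => p.1) 2 γ0)
    (h2 : γ0.map Prod.snd = μ) {G : ℝ} (hG : 0 < G)
    (hlapl : ∀ x : Euc d, ‖gradient (lapl f) x‖ ≤ G * (1 + ‖x‖))
    {δ w θ B h : ℝ} {N : ℕ} (h0 : 0 < δ) (hN : 0 < N) (hh : h = N * δ) (hL : h * L ≤ 1)
    (hE : MemLp (err f δ) 2 (μ.prod (nuW d)))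
    (hθ : L * N2 (err f δ) (μ.prod (nuW d))
        + 2 * δ * G * (1 + N2 (fun x => x) μ + √(2 * δ) * √d) + L * (δ * N2 (gradient f) μ) ≤ θ)
    (hB : N * θ ≤ B)
    (hw : √(2 * δ * N * d) + N * (δ * N2 (gradient f) μ + N2 (err f δ) (μ.prod (nuW d))) ≤ w) :
    ∃ γ1 : Measure (Euc d × Euc d), IsProbabilityMeasure γ1 ∧
      γ1.map Prod.fst = ((γ0.map Prod.fst).prod (_root_.stdGaussian d)).map (lmcStep f h) ∧
      γ1.map Prod.snd = μ ∧ MemLp (fun p : Euc d × Euc d => p.1) 2 γ1 ∧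
      N2 (fun p : Euc d × Euc d => p.1 - p.2) γ1 ^ 2 ≤
        ((1 - m * h) * N2 (fun p : Euc d × Euc d => p.1 - p.2) γ0 + 
          N * (δ * B + N2 (err f δ) (μ.prod (nuW d)))) ^ 2
        + (N * (δ * (L * w) + N2 (err f δ) (μ.prod (nuW d)))) ^ 2 := by
  have hN1 : (1:ℝ) ≤ N := by exact_mod_cast hN
  have hL0 := P.L_pos
  have hδL : δ * L ≤ 1 := by
    refine le_trans ?_ hL
    rw [hh]; nlinarith [mul_pos h0 hL0]
  obtain ⟨X, _, Q, q, S, z, I⟩ := P.cinv_all hμ h2 hG hlapl h0 hδL hE hθ hB hw N le_rfl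
  have hh0 : 0 ≤ h := by rw [hh]; positivity
  have hp := hμ.1
  have hpQ := I.prob
  set ε := N2 (err f δ) (μ.prod (nuW d)) with hε
  have hε0 : 0 ≤ ε := N2_nonneg
  have hθ0 : 0 ≤ θ := by
    refine le_trans ?_ hθ
    have : 0 ≤ N2 (fun x : Euc d => x) μ := N2_nonneg
    have : 0 ≤ N2 (gradient f) μ := N2_nonneg
    positivity
  have hB0 : 0 ≤ B := le_trans (by positivity) hB
  have hm2 := P.mu_memLp hμ
  have hq : MeasurePreserving q Q γ0 := by
    have : MeasurePreserving (Prod.fst : (Euc d × Euc d) × Euc d → _)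
      (γ0.prod (isoGaussian d (2 * δ * N))) γ0 := measurePreserving_fst
    exact this.comp I.marg
  have hS : MeasurePreserving S Q (isoGaussian d (2 * δ * N)) := by
    have : MeasurePreserving (Prod.snd : (Euc d × Euc d) × Euc d → _)
      (γ0.prod (isoGaussian d (2 * δ * N))) (isoGaussian d (2 * δ * N)) := measurePreserving_snd
    exact this.comp I.marg
  have hz0 : MeasurePreserving (fun x => (q x).2) Q μ :=
    (⟨measurable_snd, h2⟩ : MeasurePreserving Prod.snd γ0 μ).comp hq
  have mz : MemLp z 2 Q := hm2.comp_measurePreserving I.zlaw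
  have mz0 : MemLp (fun x => (q x).2) 2 Q := hm2.comp_measurePreserving hz0
  have mx0 : MemLp (fun x => (q x).1) 2 Q := h1.comp_measurePreserving hq
  have mS : MemLp S 2 Q := (isoG_memLp d _).comp_measurePreserving hS
  have m5 : MemLp (fun x => z x - (q x).2 + ((N : ℝ) * δ) • gradient f (q x).2 - S x) 2 Q :=
    ((mz.sub mz0).add ((P.g_memLp mz0).const_smul ((N:ℝ) * δ))).sub mS
  have h2' : MemLp (fun p : Euc d × Euc d => p.2) 2 γ0 :=
    hm2.comp_measurePreserving ⟨measurable_snd, h2⟩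
  have hgm := P.gcont.measurable
  have mT : Measurable (fun x => ((q x).1 - h • gradient f (q x).1 + S x, z x)) := by
    have := hq.measurable
    have := hS.measurable
    have := I.zlaw.measurable
    fun_prop
  let U : Euc d × Euc d → Euc d := fun p => (p.1 - h • gradient f p.1) - (p.2 - h • gradient f p.2)
  have mU : MemLp U 2 γ0 := (P.step_memLp h1 h).sub (P.step_memLp h2' h)
  have mUq : MemLp (fun x => U (q x)) 2 Q := mU.comp_measurePreserving hq
  have nUq : N2 (fun x => U (q x)) Q = N2 U γ0 := N2_mp hq mU.1
  have mhpos : 0 ≤ 1 - m * h := by nlinarith [P.hmL]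
  have nU : N2 U γ0 ≤ (1 - m * h) * N2 (fun p : Euc d × Euc d => p.1 - p.2) γ0 :=
    N2_le_mul (h1.sub h2') mhpos fun p => gradient_step_contract P.hm P.hmL P.hf P.hH hh0 hL p.1 p.2
  have mfst : MemLp (fun x => (q x).1 - h • gradient f (q x).1 + S x) 2 Q := (P.step_memLp mx0 h).add mS
  refine ⟨Q.map (fun x => ((q x).1 - h • gradient f (q x).1 + S x, z x)), ?_, ?_, ?_, ?_, ?_⟩
  · exact Measure.isProbabilityMeasure_map mT.aemeasurable
  · rw [Measure.map_map measurable_fst mT]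
    have hg : MeasurePreserving (fun x : Euc d => √(2 * h) • x) (_root_.stdGaussian d)
        (isoGaussian d (2 * δ * N)) := by
      refine ⟨by fun_prop, ?_⟩
      unfold isoGaussian
      rw [hh]; congr 2; funext; ring_nf
    have hf1 : MeasurePreserving (Prod.fst : Euc d × Euc d → Euc d) γ0 (γ0.map Prod.fst) :=
      ⟨measurable_fst, rfl⟩
    have hpp : IsProbabilityMeasure (γ0.map Prod.fst) :=
      Measure.isProbabilityMeasure_map measurable_fst.aemeasurable
    have k1 : MeasurePreserving (fun x => ((q x).1, S x)) Q ((γ0.map Prod.fst).prod (isoGaussian d (2 * δ * N))) :=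
      (hf1.prod (MeasurePreserving.id _)).comp I.marg
    have k2 : MeasurePreserving (fun p : Euc d × Euc d => (p.1, √(2 * h) • p.2))
      ((γ0.map Prod.fst).prod (_root_.stdGaussian d)) ((γ0.map Prod.fst).prod (isoGaussian d (2 * δ * N))) :=
      (MeasurePreserving.id _).prod hg
    have k3 : Measurable (fun p : Euc d × Euc d => p.1 - h • gradient f p.1 + p.2) := by fun_prop
    have e1 : Q.map (Prod.fst ∘ fun x => ((q x).1 - h • gradient f (q x).1 + S x, z x))
        = (Q.map (fun x => ((q x).1, S x))).map (fun p : Euc d × Euc d => p.1 - h • gradient f p.1 + p.2) := by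
      rw [Measure.map_map k3 k1.measurable]; rfl
    rw [e1, k1.map_eq, ← k2.map_eq, Measure.map_map k3 k2.measurable]
    rfl
  · rw [Measure.map_map measurable_snd mT]
    exact I.zlaw.map_eq
  · rw [memLp_map mT (by fun_prop)]
    exact mfst
  · rw [N2_map mT (by fun_prop)]
    have e : ∀ x, ((q x).1 - h • gradient f (q x).1 + S x) - z x = U (q x) - (z x - (q x).2 + ((N : ℝ) * δ) • gradient f (q x).2 - S x) := by
      intro x; rw [← hh]; simp only [U]; abel
    simp only [e]
    rw [N2_sub_sq mUq m5, nUq]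
    have b7 := I.b7 U mU
    have b5 := I.b5
    have b5' := pow_le_pow_left₀ N2_nonneg b5 2
    have hb : 0 ≤ (N:ℝ) * (δ * B + ε) := by positivity
    have nU' := pow_le_pow_left₀ N2_nonneg nU 2
    have nU2 := mul_le_mul_of_nonneg_right nU hb
    have := neg_le_of_abs_le b7
    nlinarith [sq_nonneg ((N:ℝ) * (δ * B + ε))]

end Pot
end

section
namespace Pot
variable {d : ℕ} {f : Euc d → ℝ} {m L : ℝ} {μ : Measure (Euc d)}

lemma N2_id_le (P : Pot f m L) (hμ : IsGibbs f μ) : N2 (fun x : Euc d => x) μ ≤ √(d / m) := by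
  apply Real.le_sqrt_of_sq_le
  rw [le_div_iff₀ P.hm, mul_comm]
  exact P.moment hμ

lemma N2_grad_le (P : Pot f m L) (hμ : IsGibbs f μ) : N2 (gradient f) μ ≤ L * √(d / m) := by
  refine le_trans ?_ (mul_le_mul_of_nonneg_left (P.N2_id_le hμ) P.L_pos.le)
  exact N2_le_mul (P.mu_memLp hμ) P.L_pos.le P.grad_le

set_option maxHeartbeats 1000000 in
lemma step_bound (P : Pot f m L) (hμ : IsGibbs f μ) {γ0 : Measure (Euc d × Euc d)} [IsProbabilityMeasure γ0]
    (h1 : MemLp (fun p : Euc d × Euc d => p.1) 2 γ0)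
    (h2 : γ0.map Prod.snd = μ) {G : ℝ} (hG : 0 < G)
    (hlapl : ∀ x : Euc d, ‖gradient (lapl f) x‖ ≤ G * (1 + ‖x‖))
    {h : ℝ} (hh0 : 0 < h) (hL : h * L ≤ 1) :
    ∃ γ1 : Measure (Euc d × Euc d), IsProbabilityMeasure γ1 ∧
      γ1.map Prod.fst = ((γ0.map Prod.fst).prod (_root_.stdGaussian d)).map (lmcStep f h) ∧
      γ1.map Prod.snd = μ ∧ MemLp (fun p : Euc d × Euc d => p.1) 2 γ1 ∧
      N2 (fun p : Euc d × Euc d => p.1 - p.2) γ1 ^ 2 ≤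
        ((1 - m * h) * N2 (fun p : Euc d × Euc d => p.1 - p.2) γ0 + 
          (h * (L * (h ^ 2 * G) + 2 * h * G * (1 + √(d / m) + √(2 * h * d)) + L * (h * (L * √(d / m)))) + h ^ 2 * G)) ^ 2
        + (h * (L * (√(2 * h * d) + h * (L * √(d / m)) + h ^ 2 * G)) + h ^ 2 * G) ^ 2 := by
  obtain ⟨K, hK⟩ := exists_nat_ge h
  have hL0 := P.L_pos
  have hKn : ∀ n : ℕ, (0:ℝ) < ((n + K + 1 : ℕ) : ℝ) := fun n => by positivity
  have hlim : Filter.Tendsto (fun n : ℕ => h / ((n + K + 1 : ℕ) : ℝ)) Filter.atTop (nhds 0) := by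
    have : Filter.Tendsto (fun n : ℕ => h / (n : ℝ)) Filter.atTop (nhds 0) :=
      tendsto_const_div_atTop_nhds_zero_nat h
    exact (Filter.tendsto_add_atTop_iff_nat (K + 1)).2 this
  have hev := P.err_small hμ (δ := fun n : ℕ => h / ((n + K + 1 : ℕ) : ℝ)) (τ := h * G)
    (fun n => div_pos hh0 (hKn n))
    (fun n => by
      rw [div_le_one (hKn n)]
      push_cast
      have : (0:ℝ) ≤ n := Nat.cast_nonneg n
      linarith) hlim (by positivity)
  obtain ⟨n, hE, hε⟩ := hev.exists
  set N : ℕ := n + K + 1 with hN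
  have hNp : (0:ℝ) < N := hKn n
  have hN1 : (1:ℝ) ≤ N := by exact_mod_cast (by omega : 1 ≤ N)
  set δ := h / (N : ℝ) with hδ
  have hδ0 : 0 < δ := div_pos hh0 hNp
  have hNδ : h = N * δ := by rw [hδ]; field_simp
  have hδh : δ ≤ h := by rw [hNδ]; nlinarith
  obtain ⟨γ1, i1, i2, i3, i4, i5⟩ := P.big_step hμ h1 h2 hG hlapl hδ0 (by omega : 0 < N) hNδ hL hE le_rfl le_rfl le_rfl
  refine ⟨γ1, i1, i2, i3, i4, i5.trans ?_⟩
  set ε := N2 (err f δ) (μ.prod (nuW d)) with hεd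
  have hε0 : 0 ≤ ε := N2_nonneg
  have hNε : N * ε ≤ h ^ 2 * G := by
    calc N * ε ≤ N * (h * G * δ) := by gcongr
      _ = h * G * (N * δ) := by ring
      _ = _ := by rw [← hNδ]; ring
  have hA := P.N2_grad_le hμ
  have hM := P.N2_id_le hμ
  have hA0 : 0 ≤ N2 (gradient f) μ := N2_nonneg
  have hM0 : 0 ≤ N2 (fun x : Euc d => x) μ := N2_nonneg
  set A := N2 (gradient f) μ
  set M := N2 (fun x : Euc d => x) μ
  have hsq : √(2 * δ) * √d ≤ √(2 * h * d) := by
    rw [← Real.sqrt_mul (by positivity)]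
    apply Real.sqrt_le_sqrt; gcongr
  have hsq2 : √(2 * δ * N * d) = √(2 * h * d) := by congr 1; rw [hNδ]; ring
  have hρ : 0 ≤ 1 - m * h := by nlinarith [P.hmL]
  have hc : 0 ≤ N2 (fun p : Euc d × Euc d => p.1 - p.2) γ0 := N2_nonneg
  have e1 : (N:ℝ) * (δ * (N * (L * ε + 2 * δ * G * (1 + M + √(2 * δ) * √d) + L * (δ * A))) + ε)
      = h * (L * (N * ε) + 2 * h * G * (1 + M + √(2 * δ) * √d) + L * (h * A)) + N * ε := by
    rw [hNδ]; ring
  have e2 : (N:ℝ) * (δ * (L * (√(2 * δ * N * d) + N * (δ * A + ε))) + ε)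
      = h * (L * (√(2 * h * d) + h * A + N * ε)) + N * ε := by
    rw [hsq2]
    generalize √(2 * h * d) = r
    rw [hNδ]; ring
  rw [e1, e2]
  have := mul_nonneg hρ hc
  gcongr
end Pot

/-- The recursion `D'² ≤ (ρ D + b)² + σ²` is contracted to a ball of radius `C`. -/
lemma recur_aux {ρ b σ C D D' a r : ℝ} (hr : r ^ 2 = 1 - ρ) (hr0 : 0 < r) (hρ : 0 ≤ ρ) (hb : 0 ≤ b) (hσ : 0 ≤ σ)
    (hC : C = b / r ^ 2 + σ / r) (ha : 0 ≤ a) (hD0 : 0 ≤ D) (hD : D ≤ a + C)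
    (h : D' ^ 2 ≤ (ρ * D + b) ^ 2 + σ ^ 2) : D' ≤ ρ * a + C := by
  have h1 : r ^ 2 * C = b + r * σ := by rw [hC]; field_simp
  have h2 : r * C = b / r + σ := by rw [hC]; field_simp
  have hC0 : 0 ≤ C := by rw [hC]; positivity
  have h3 : σ ≤ r * C := by rw [h2]; have : 0 ≤ b / r := by positivity
                            linarith
  refine abs_le_of_sq_le_sq' ?_ (by positivity) |>.2
  refine h.trans ?_
  have h4 : (ρ * D + b) ^ 2 ≤ (ρ * a + (ρ * C + b)) ^ 2 := by
    apply pow_le_pow_left₀ (by positivity)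
    nlinarith
  have h5 : ρ * C + b = C - r * σ := by
    have : ρ = 1 - r ^ 2 := by linarith
    rw [this]; linarith
  have h6 : 0 ≤ ρ * C + b := by positivity
  have h7 : 0 ≤ ρ * a := by positivity
  have h8 : 0 ≤ r * σ := by positivity
  have h9 : σ ^ 2 ≤ r * σ * C := by nlinarith
  rw [h5] at h4 h6
  nlinarith [mul_nonneg h7 h8, mul_nonneg h6 h8]

lemma num_aux {m L G h s E : ℝ} (hm : 0 < m) (hmL : m ≤ L) (hG : 0 < G) (hh : 0 < h) (hs : 0 ≤ s)
    (hh1 : h * (4 * L ^ 2) ≤ m) (hE : 2 * s ^ 2 + 1 ≤ E ^ 2) (hE0 : 0 ≤ E) {r : ℝ} (hr : r ^ 2 = m * h) (hr0 : 0 < r)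
    {u : ℝ} (hu0 : 0 ≤ u) (hu : u ^ 2 = 2 * h * (s ^ 2 * m)) :
    (h * (L * (h ^ 2 * G) + 2 * h * G * (1 + s + u) + L * (h * (L * s))) + h ^ 2 * G) / r ^ 2
      + (h * (L * (u + h * (L * s) + h ^ 2 * G)) + h ^ 2 * G) / r ≤ 10 * (L ^ 2 + G) * E / m * h := by
  have hL : 0 < L := hm.trans_le hmL
  have hhL : h * L ≤ 1 / 4 := by
    have : (h * L) * (4 * L) ≤ 1 * L := by nlinarith
    nlinarith
  have hmh : m * h ≤ 1 / 4 := by nlinarith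
  have hr2 : r ≤ 1 / 2 := by nlinarith
  have hur : u ≤ 3 / 2 * (r * s) := by
    refine abs_le_of_sq_le_sq' ?_ (by positivity) |>.2
    rw [hu, mul_pow, mul_pow, hr]
    have : 0 ≤ s ^ 2 * m * h := by positivity
    nlinarith
  have hus : u ≤ s := by nlinarith
  have e1 : (h * (L * (h ^ 2 * G) + 2 * h * G * (1 + s + u) + L * (h * (L * s))) + h ^ 2 * G) / r ^ 2
      = (L * h * G + 2 * G * (1 + s + u) + L ^ 2 * s + G) / m * h := by
    rw [hr]; field_simp
  have e2 : (h * (L * (u + h * (L * s) + h ^ 2 * G)) + h ^ 2 * G) / r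
      ≤ (3 / 2 * L ^ 2 * s + r * (L ^ 2 * s + h * L * G + G)) / m * h := by
    rw [div_le_iff₀ hr0]
    calc (h * (L * (u + h * (L * s) + h ^ 2 * G)) + h ^ 2 * G) 
        ≤ (h * (L * (3 / 2 * (r * s) + h * (L * s) + h ^ 2 * G)) + h ^ 2 * G) := by gcongr
      _ = (3 / 2 * L * m * s) / m * h * r + (m * h) * (L ^ 2 * s + h * L * G + G) / m * h := by
        field_simp
        ring
      _ = (3 / 2 * (L * m) * s + r * (L ^ 2 * s + h * L * G + G)) / m * h * r := by
        rw [← hr]; ring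
      _ ≤ _ := by
        have : L * m ≤ L ^ 2 := by nlinarith
        gcongr
  rw [e1]
  refine (add_le_add le_rfl e2).trans ?_
  rw [← add_mul, ← add_div]
  gcongr
  have hsE : s ≤ E := by nlinarith
  have h1E : 1 ≤ E := by nlinarith
  have a1 : L ^ 2 * s ≤ L ^ 2 * E := by gcongr
  have a2 : G * s ≤ G * E := by gcongr
  have a3 : G * 1 ≤ G * E := by gcongr
  have a4 : G * u ≤ G * E := by gcongr; exact hus.trans hsE
  have a5 : h * L * G ≤ 1 / 4 * G := by gcongr
  have a6 : r * (L ^ 2 * s + h * L * G + G) ≤ 1 / 2 * (L ^ 2 * s + h * L * G + G) := by gcongr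
  have a7 : 0 ≤ L ^ 2 * s := by positivity
  nlinarith
end

section

lemma W2_le_N2 {d : ℕ} {μ1 μ2 : Measure (Euc d)} {γ : Measure (Euc d × Euc d)} (hγ : IsProbabilityMeasure γ)
    (h1 : γ.map Prod.fst = μ1) (h2 : γ.map Prod.snd = μ2)
    (hL : MemLp (fun p : Euc d × Euc d => p.1 - p.2) 2 γ) :
    W2 μ1 μ2 ≤ N2 (fun p : Euc d × Euc d => p.1 - p.2) γ := by
  unfold W2
  have key : (⨅ γ ∈ {γ : Measure (Euc d × Euc d) |
        IsProbabilityMeasure γ ∧ γ.map Prod.fst = μ1 ∧ γ.map Prod.snd = μ2},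
      ∫⁻ p, (‖p.1 - p.2‖₊ : ℝ≥0∞) ^ 2 ∂γ) ≤ eLpNorm (fun p : Euc d × Euc d => p.1 - p.2) 2 γ ^ 2 := by
    rw [eLp2_sq]
    exact iInf₂_le γ ⟨hγ, h1, h2⟩
  have hfin : eLpNorm (fun p : Euc d × Euc d => p.1 - p.2) 2 γ ^ 2 ≠ ⊤ := ENNReal.pow_ne_top hL.2.ne
  have := ENNReal.toReal_mono hfin key
  refine (Real.sqrt_le_sqrt this).trans ?_
  rw [ENNReal.toReal_pow, Real.sqrt_sq ENNReal.toReal_nonneg]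
  rfl

lemma coupling_memLp {d : ℕ} {μ1 μ2 : Measure (Euc d)} {γ : Measure (Euc d × Euc d)}
    (h1 : γ.map Prod.fst = μ1) (h2 : γ.map Prod.snd = μ2)
    (m1 : MemLp (fun x : Euc d => x) 2 μ1) (m2 : MemLp (fun x : Euc d => x) 2 μ2) :
    MemLp (fun p : Euc d × Euc d => p.1) 2 γ ∧ MemLp (fun p : Euc d × Euc d => p.1 - p.2) 2 γ := by
  have a1 : MemLp (fun p : Euc d × Euc d => p.1) 2 γ := m1.comp_measurePreserving ⟨measurable_fst, h1⟩
  have a2 : MemLp (fun p : Euc d × Euc d => p.2) 2 γ := m2.comp_measurePreserving ⟨measurable_snd, h2⟩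
  exact ⟨a1, a1.sub a2⟩

lemma W2_approx {d : ℕ} {μ1 μ2 : Measure (Euc d)} [IsProbabilityMeasure μ1] [IsProbabilityMeasure μ2]
    (m1 : MemLp (fun x : Euc d => x) 2 μ1) (m2 : MemLp (fun x : Euc d => x) 2 μ2) {η : ℝ} (hη : 0 < η) :
    ∃ γ : Measure (Euc d × Euc d), IsProbabilityMeasure γ ∧ γ.map Prod.fst = μ1 ∧ γ.map Prod.snd = μ2 ∧
      N2 (fun p : Euc d × Euc d => p.1 - p.2) γ ≤ W2 μ1 μ2 + η := by
  set I := (⨅ γ ∈ {γ : Measure (Euc d × Euc d) |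
        IsProbabilityMeasure γ ∧ γ.map Prod.fst = μ1 ∧ γ.map Prod.snd = μ2},
      ∫⁻ p, (‖p.1 - p.2‖₊ : ℝ≥0∞) ^ 2 ∂γ) with hI
  have hW : W2 μ1 μ2 = √(I.toReal) := rfl
  have hfin : I ≠ ⊤ := by
    have b1 : (μ1.prod μ2).map Prod.fst = μ1 := by simp [Measure.map_fst_prod]
    have b2 : (μ1.prod μ2).map Prod.snd = μ2 := by simp [Measure.map_snd_prod]
    have hL := (coupling_memLp b1 b2 m1 m2).2
    have key : I ≤ eLpNorm (fun p : Euc d × Euc d => p.1 - p.2) 2 (μ1.prod μ2) ^ 2 := by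
      rw [eLp2_sq]
      exact iInf₂_le _ ⟨inferInstance, b1, b2⟩
    exact ne_top_of_le_ne_top (ENNReal.pow_ne_top hL.2.ne) key
  have hW0 : 0 ≤ W2 μ1 μ2 := by rw [hW]; positivity
  have hlt : I < ENNReal.ofReal ((W2 μ1 μ2 + η) ^ 2) := by
    rw [ENNReal.lt_ofReal_iff_toReal_lt hfin]
    have : I.toReal = W2 μ1 μ2 ^ 2 := by rw [hW, Real.sq_sqrt ENNReal.toReal_nonneg]
    rw [this]; nlinarith
  rw [hI] at hlt
  simp only [iInf_lt_iff] at hlt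
  obtain ⟨γ, hγ, hc⟩ := hlt
  refine ⟨γ, hγ.1, hγ.2.1, hγ.2.2, ?_⟩
  have := eLp2_le (F := fun p : Euc d × Euc d => p.1 - p.2) (by positivity) hc.le
  exact ENNReal.toReal_le_of_le_ofReal (by positivity) this

/-- Law of the LMC iterates. -/
lemma lmc_indep {d : ℕ} {Ω : Type*} {mΩ : MeasurableSpace Ω} {P : Measure Ω} [IsProbabilityMeasure P]
    {f : Euc d → ℝ} {h : ℝ} (hS : Measurable (lmcStep f h))
    {x0 : Ω → Euc d} (hx0 : AEMeasurable x0 P)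
    {ξ : ℕ → Ω → Euc d} (hξmeas : ∀ k, Measurable (ξ k))
    (hindep : iIndepFun (fun i : Option ℕ => i.elim x0 ξ) P)
    {Xb : ℕ → Ω → Euc d} (hXb0 : Xb 0 = x0)
    (hXb : ∀ k : ℕ, Xb (k + 1) = fun ω => lmcStep f h (Xb k ω, ξ (k + 1) ω)) (k : ℕ) :
    AEMeasurable (Xb k) P ∧ IndepFun (Xb k) (ξ (k + 1)) P := by
  have hmeas : ∀ i : Option ℕ, AEMeasurable (i.elim x0 ξ) P := by
    intro i; cases i with
    | none => exact hx0
    | some i => exact (hξmeas i).aemeasurable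
  have hrep : ∀ k, ∃ Φ : (((Finset.range (k + 1)).insertNone : Finset (Option ℕ)) → Euc d) → Euc d,
      Measurable Φ ∧ Xb k = fun ω => Φ (fun i => (i : Option ℕ).elim x0 ξ ω) := by
    intro k
    induction k with
    | zero =>
      refine ⟨fun v => v ⟨none, by simp⟩, by fun_prop, ?_⟩
      rw [hXb0]; rfl
    | succ k ih =>
      obtain ⟨Φ, hΦ, e⟩ := ih
      refine ⟨fun v => lmcStep f h (Φ (fun i => v ⟨i.1, ?_⟩), v ⟨some (k + 1), by simp⟩), ?_, ?_⟩
      · have := i.2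
        rw [Finset.mem_insertNone] at this ⊢
        intro a ha
        have := this a ha
        simp at this ⊢; omega
      · apply hS.comp
        apply Measurable.prodMk
        · apply hΦ.comp
          fun_prop
        · fun_prop
      · rw [hXb k, e]; rfl
  constructor
  · obtain ⟨Φ, hΦ, e⟩ := hrep k
    rw [e]
    exact hΦ.comp_aemeasurable (aemeasurable_pi_lambda _ fun i => hmeas i)
  · obtain ⟨Φ, hΦ, e⟩ := hrep k
    have hd : Disjoint ((Finset.range (k + 1)).insertNone : Finset (Option ℕ)) {some (k + 1)} := by
      simp
    have := hindep.indepFun_finset₀ _ _ hd hmeas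
    have hΨ : Measurable (fun v : (({some (k + 1)} : Finset (Option ℕ)) → Euc d) => v ⟨some (k + 1), by simp⟩) := by
      fun_prop
    have := this.comp hΦ hΨ
    rw [e]
    exact this

lemma lmc_law {d : ℕ} {Ω : Type*} {mΩ : MeasurableSpace Ω} {P : Measure Ω} [IsProbabilityMeasure P]
    {f : Euc d → ℝ} {h : ℝ} (hS : Measurable (lmcStep f h))
    {x0 : Ω → Euc d} (hx0 : AEMeasurable x0 P)
    {ξ : ℕ → Ω → Euc d} (hξmeas : ∀ k, Measurable (ξ k))
    (hξlaw : ∀ k, P.map (ξ k) = _root_.stdGaussian d)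
    (hindep : iIndepFun (fun i : Option ℕ => i.elim x0 ξ) P)
    {Xb : ℕ → Ω → Euc d} (hXb0 : Xb 0 = x0)
    (hXb : ∀ k : ℕ, Xb (k + 1) = fun ω => lmcStep f h (Xb k ω, ξ (k + 1) ω)) (k : ℕ) :
    P.map (Xb (k + 1)) = ((P.map (Xb k)).prod (_root_.stdGaussian d)).map (lmcStep f h) := by
  obtain ⟨a, b⟩ := lmc_indep hS hx0 hξmeas hindep hXb0 hXb k
  rw [indepFun_iff_map_prod_eq_prod_map_map a (hξmeas _).aemeasurable, hξlaw] at b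
  rw [← b, AEMeasurable.map_map_of_aemeasurable hS.aemeasurable (a.prodMk (hξmeas _).aemeasurable), hXb]
  rfl

set_option maxHeartbeats 1000000 in
lemma lmc_main
    {d : ℕ} {Ω : Type*} {mΩ : MeasurableSpace Ω} {P : Measure Ω} [IsProbabilityMeasure P]
    {f : Euc d → ℝ} {m L G : ℝ} (HP : Pot f m L) (hG : 0 < G)
    (hlapl : ∀ x : Euc d, ‖gradient (lapl f) x‖ ≤ G * (1 + ‖x‖))
    {μ : Measure (Euc d)} (hμ : IsGibbs f μ)
    {x0 : Ω → Euc d} (hx0 : MemLp x0 2 P)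
    {ξ : ℕ → Ω → Euc d} (hξmeas : ∀ k, Measurable (ξ k))
    (hξlaw : ∀ k, P.map (ξ k) = _root_.stdGaussian d)
    (hindep : iIndepFun (fun i : Option ℕ => i.elim x0 ξ) P)
    {h : ℝ} (hh0 : 0 < h) (hh1 : h * (4 * L ^ 2) ≤ m)
    {Xb : ℕ → Ω → Euc d} (hXb0 : Xb 0 = x0)
    (hXb : ∀ k : ℕ, Xb (k + 1) = fun ω => lmcStep f h (Xb k ω, ξ (k + 1) ω))
    {E : ℝ} (hE0 : 0 ≤ E) (hE : 2 * (d / m) + 1 ≤ E ^ 2) (k : ℕ) :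
    W2 (P.map (Xb k)) μ ≤
      Real.exp (-(m * k * h)) * W2 (P.map x0) μ + 10 * (L ^ 2 + G) * E / m * h := by
  have hp := hμ.1
  have hm := HP.hm
  have hL0 := HP.L_pos
  have hmL := HP.hmL
  have hhL : h * L ≤ 1 := by
    have : (h * L) * (4 * L) ≤ 1 * L := by nlinarith
    nlinarith
  have hmh : m * h ≤ 1 := by nlinarith
  have hS := HP.lmcStep_meas h
  have hpx : IsProbabilityMeasure (P.map x0) := Measure.isProbabilityMeasure_map hx0.1.aemeasurable
  have mx : MemLp (fun x : Euc d => x) 2 (P.map x0) := by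
    rw [memLp_map_measure_iff (by fun_prop) hx0.1.aemeasurable]; exact hx0
  have mμ := HP.mu_memLp hμ
  set s := √(d / m) with hs
  have hs0 : 0 ≤ s := Real.sqrt_nonneg _
  have hs2 : s ^ 2 = d / m := Real.sq_sqrt (by positivity)
  set u := √(2 * h * d) with hu
  have hu0 : 0 ≤ u := Real.sqrt_nonneg _
  have hu2 : u ^ 2 = 2 * h * (s ^ 2 * m) := by
    rw [hu, Real.sq_sqrt (by positivity), hs2]; field_simp
  set r := √(m * h) with hr
  have hr0 : 0 < r := Real.sqrt_pos.2 (by positivity)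
  have hr2 : r ^ 2 = m * h := Real.sq_sqrt (by positivity)
  set b := (h * (L * (h ^ 2 * G) + 2 * h * G * (1 + s + u) + L * (h * (L * s))) + h ^ 2 * G) with hb
  set σ := (h * (L * (u + h * (L * s) + h ^ 2 * G)) + h ^ 2 * G) with hσ
  have hb0 : 0 ≤ b := by positivity
  have hσ0 : 0 ≤ σ := by positivity
  have hC := num_aux hm hmL hG hh0 hs0 hh1 (by rw [hs2]; exact hE) hE0 hr2 hr0 hu0 hu2
  rw [← hb, ← hσ] at hC
  set C := b / r ^ 2 + σ / r with hCd
  have hρ : 0 ≤ 1 - m * h := by linarith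
  -- propagate couplings
  have prop : ∀ γ : Measure (Euc d × Euc d), IsProbabilityMeasure γ → γ.map Prod.fst = P.map x0 →
      γ.map Prod.snd = μ → ∀ k : ℕ, ∃ γk : Measure (Euc d × Euc d), IsProbabilityMeasure γk ∧
        γk.map Prod.fst = P.map (Xb k) ∧ γk.map Prod.snd = μ ∧ MemLp (fun p : Euc d × Euc d => p.1) 2 γk ∧
        N2 (fun p : Euc d × Euc d => p.1 - p.2) γk
          ≤ (1 - m * h) ^ k * N2 (fun p : Euc d × Euc d => p.1 - p.2) γ + C := by
    intro γ i1 i2 i3 k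
    induction k with
    | zero =>
      refine ⟨γ, i1, by rw [i2, hXb0], i3, (coupling_memLp i2 i3 mx mμ).1, ?_⟩
      have : 0 ≤ C := by positivity
      simpa using this
    | succ k ih =>
      obtain ⟨γk, j1, j2, j3, j4, j5⟩ := ih
      obtain ⟨γ1, l1, l2, l3, l4, l5⟩ := HP.step_bound hμ j4 j3 hG hlapl hh0 hhL
      refine ⟨γ1, l1, ?_, l3, l4, ?_⟩
      · rw [l2, j2, lmc_law hS hx0.1.aemeasurable hξmeas hξlaw hindep hXb0 hXb]
      · have hn : 0 ≤ N2 (fun p : Euc d × Euc d => p.1 - p.2) γ := N2_nonneg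
        have := recur_aux (r := r) (C := C) (by rw [hr2]; ring) hr0 hρ hb0 hσ0 hCd (mul_nonneg (pow_nonneg hρ k) hn)
          N2_nonneg j5 l5
        rw [pow_succ' (1 - m * h) k, mul_assoc]
        exact this
  have hexp : (1 - m * h) ^ k ≤ Real.exp (-(m * k * h)) := by
    have := Real.one_sub_le_exp_neg (m * h)
    refine (pow_le_pow_left₀ hρ this k).trans ?_
    rw [← Real.exp_nat_mul]
    apply le_of_eq; congr 1; ring
  have hexp1 : Real.exp (-(m * k * h)) ≤ 1 := by
    apply Real.exp_le_one_iff.2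
    have : 0 ≤ m * k * h := by positivity
    linarith
  apply le_of_forall_pos_le_add
  intro η hη
  obtain ⟨γ, i1, i2, i3, i4⟩ := W2_approx mx mμ hη
  obtain ⟨γk, j1, j2, j3, j4, j5⟩ := prop γ i1 i2 i3 k
  have j6 : MemLp (fun p : Euc d × Euc d => p.2) 2 γk := mμ.comp_measurePreserving ⟨measurable_snd, j3⟩
  have hn : 0 ≤ N2 (fun p : Euc d × Euc d => p.1 - p.2) γ := N2_nonneg
  have a1 := mul_le_mul_of_nonneg_right hexp hn
  have a2 := mul_le_mul_of_nonneg_left i4 (Real.exp_pos (-(m * k * h))).le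
  have a3 := mul_le_mul_of_nonneg_right hexp1 hη.le
  have a4 := W2_le_N2 j1 j2 j3 (j4.sub j6)
  linarith

theorem lmc_final
    {d : ℕ} {Ω : Type*} {mΩ : MeasurableSpace Ω} {P : Measure Ω} [IsProbabilityMeasure P]
    {f : Euc d → ℝ} {m L G : ℝ}
    (hm : 0 < m) (hmL : m ≤ L) (hf : ContDiff ℝ 3 f) (hHess : HessianBounds m L f)
    (hgrad0 : gradient f 0 = 0) (hG : 0 < G)
    (hlapl : ∀ x : Euc d, ‖gradient (lapl f) x‖ ≤ G * (1 + ‖x‖))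
    {μ : Measure (Euc d)} (hμ : IsGibbs f μ)
    {x0 : Ω → Euc d} (hx0 : MemLp x0 2 P)
    {ξ : ℕ → Ω → Euc d} (hξmeas : ∀ k, Measurable (ξ k))
    (hξlaw : ∀ k, P.map (ξ k) = _root_.stdGaussian d)
    (hindep : iIndepFun (fun i : Option ℕ => i.elim x0 ξ) P)
    {h : ℝ} (hh0 : 0 < h) (hh1 : h ≤ 1 / (4 * (L / m) * L))
    {Xb : ℕ → Ω → Euc d} (hXb0 : Xb 0 = x0)
    (hXb : ∀ k : ℕ, Xb (k + 1) =
      fun ω => Xb k ω - h • gradient f (Xb k ω) + Real.sqrt (2 * h) • ξ (k + 1) ω)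
    (k : ℕ) :
    W2 (P.map (Xb k)) μ ≤
      Real.exp (-(m * k * h)) * W2 (P.map x0) μ +
        (10 * (L ^ 2 + G) / m ^ ((3:ℝ)/2) *
          Real.sqrt (2 * d + m * ((∫ ω, ‖x0 ω‖ ^ 2 ∂P) + 1))) * h := by
  have hL0 : 0 < L := hm.trans_le hmL
  have hintg : 0 ≤ ∫ ω, ‖x0 ω‖ ^ 2 ∂P := integral_nonneg fun ω => by positivity
  set M := ∫ ω, ‖x0 ω‖ ^ 2 ∂P
  have hh1' : h * (4 * L ^ 2) ≤ m := by
    rw [le_div_iff₀ (by positivity)] at hh1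
    calc h * (4 * L ^ 2) = (h * (4 * (L / m) * L)) * m := by field_simp
      _ ≤ 1 * m := by gcongr
      _ = m := one_mul m
  have hpow : m ^ ((3:ℝ)/2) = m * √m := by
    rw [show (3:ℝ)/2 = 1 + 1/2 by norm_num, Real.rpow_add hm, Real.rpow_one, Real.sqrt_eq_rpow]
  have hsm : 0 < √m := Real.sqrt_pos.2 hm
  have hE2 : (√(2 * d + m * (M + 1)) / √m) ^ 2 = (2 * d + m * (M + 1)) / m := by
    rw [div_pow, Real.sq_sqrt (by positivity), Real.sq_sqrt hm.le]
  have key := lmc_main (E := √(2 * d + m * (M + 1)) / √m) ⟨hm, hmL, hf, hHess, hgrad0⟩ hG hlapl hμ hx0 hξmeas hξlaw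
    hindep hh0 hh1' hXb0 hXb (by positivity) (by
      rw [hE2, le_div_iff₀ hm]
      have : (2 * ((d:ℝ) / m) + 1) * m = 2 * d + m := by field_simp
      rw [this]; nlinarith) k
  refine key.trans (le_of_eq ?_)
  congr 2
  rw [hpow]
  field_simp
end

/-- **Non-asymptotic 2-Wasserstein error bound for LMC** (Theorem 3).
Let `f ∈ C³` be `m`-strongly convex and `L`-smooth (`0 < m ≤ L`) with `∇f(0) = 0` and
`‖∇(Δf)(x)‖ ≤ G (1 + ‖x‖)` for some `G > 0`.  Let `μ ∝ exp (-f)` have finite second moment,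
and let `x̄_k` be the LMC iterates with step size `h` started from a square-integrable `x₀`,
driven by i.i.d. standard Gaussian vectors independent of `x₀`.  Then for every
`0 < h ≤ 1/(4κL)` and every `k`:
`W₂(Law(x̄_k), μ) ≤ exp (-m k h) W₂(Law(x₀), μ) + C_LMC h`, where
`C_LMC = (10 (L² + G)/m^{3/2}) √(2d + m (E‖x₀‖² + 1))`. -/
theorem lmc_w2_nonasymptotic_bound
    {d : ℕ} {Ω : Type*} {mΩ : MeasurableSpace Ω} {P : Measure Ω} [IsProbabilityMeasure P]
    {f : Euc d → ℝ} {m L G : ℝ}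
    (hm : 0 < m) (hmL : m ≤ L) (hf : ContDiff ℝ 3 f) (hHess : HessianBounds m L f)
    (hgrad0 : gradient f 0 = 0) (hG : 0 < G)
    (hlapl : ∀ x : Euc d, ‖gradient (lapl f) x‖ ≤ G * (1 + ‖x‖))
    {μ : Measure (Euc d)} (hμ : IsGibbs f μ)
    (hμ2 : (∫⁻ x, (‖x‖₊ : ℝ≥0∞) ^ 2 ∂μ) < ⊤)
    {x0 : Ω → Euc d} (hx0 : MemLp x0 2 P)
    {ξ : ℕ → Ω → Euc d} (hξmeas : ∀ k, Measurable (ξ k))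
    (hξlaw : ∀ k, P.map (ξ k) = stdGaussian d)
    (hindep : iIndepFun (fun i : Option ℕ => i.elim x0 ξ) P)
    {h : ℝ} (hh0 : 0 < h) (hh1 : h ≤ 1 / (4 * (L / m) * L))
    {Xb : ℕ → Ω → Euc d} (hXb0 : Xb 0 = x0)
    (hXb : ∀ k : ℕ, Xb (k + 1) =
      fun ω => Xb k ω - h • gradient f (Xb k ω) + Real.sqrt (2 * h) • ξ (k + 1) ω)
    (k : ℕ) :
    W2 (P.map (Xb k)) μ ≤
      Real.exp (-(m * k * h)) * W2 (P.map x0) μ +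
        (10 * (L ^ 2 + G) / m ^ ((3:ℝ)/2) *
          Real.sqrt (2 * d + m * ((∫ ω, ‖x0 ω‖ ^ 2 ∂P) + 1))) * h := by
  exact lmc_final hm hmL hf hHess hgrad0 hG hlapl hμ hx0 hξmeas hξlaw hindep hh0 hh1 hXb0 hXb k

end
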